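/- arXiv:1803.08386 — 7 statements merged into one kernel-verified Lean document; each statement's English description precedes it below -/
import Mathlib

section
/- Let x, x̄ : [t0, τ] → ℝⁿ be continuously differentiable functions satisfying the triangular system ẋ_i(t) = a_{i+1}(t, x_1(t)) x_{i+1}(t) + f_i(t, x_1(t)) for i = 1, …, n−1 and ẋ_n(t) = f_n(t, x(t)) on [t0, τ] (and likewise for x̄). Assume that the outputs coincide, x_1(t) = x̄_1(t) for all t ∈ [t0, τ], and that a_{i+1}(t0, x_1(t0)) ≠ 0 for every i = 1, …, n−1. Then x(t) = x̄(t) for all t ∈ [t0, τ]; in particular x(t0) = x̄(t0). -/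
open MeasureTheory Set Filter Topology

/-!
Since the outputs coincide, both solutions see the same coefficients, so `e = x - xb` satisfies the
linear relations `eᵢ' = aᵢ(t, x₀(t)) • eᵢ₊₁` with `e₀ = 0`. Near `t0` the coefficients do not
vanish, hence `eᵢ = 0` forces `eᵢ₊₁ = 0` on a neighbourhood of `t0`, and inductively `e t0 = 0`.
The coefficients may vanish away from `t0`, where this argument breaks down; there the linear
relations, together with the Lipschitz bound on the last coordinate, give `‖e'‖ ≤ K * ‖e‖`, and
Grönwall's inequality propagates `e = 0`.
-/

section LinearChain

variable {𝕜 E : Type*} [NontriviallyNormedField 𝕜] [NormedAddCommGroup E] [NormedSpace 𝕜 E]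
  {s : Set 𝕜} {t₀ : 𝕜}

theorem eventually_eq_zero_of_hasDerivWithinAt_smul {b : 𝕜 → 𝕜} {u v : 𝕜 → E}
    (hs : UniqueDiffOn 𝕜 s) (hb : ContinuousWithinAt b s t₀) (hb₀ : b t₀ ≠ 0)
    (hu : ∀ t ∈ s, HasDerivWithinAt u (b t • v t) s t) (hu₀ : ∀ᶠ t in 𝓝[s] t₀, u t = 0) :
    ∀ᶠ t in 𝓝[s] t₀, v t = 0 := by
  filter_upwards [eventually_eventually_nhdsWithin.2 hu₀, hb.eventually_ne hb₀,
    self_mem_nhdsWithin] with t hut hbt hts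
  have hu_zero : HasDerivWithinAt u 0 s t :=
    (hasDerivWithinAt_const t s (0 : E)).congr_of_eventuallyEq_of_mem hut hts
  have hbv : b t • v t = 0 := (hs t hts).eq_deriv s (hu t hts) hu_zero
  exact (smul_eq_zero.1 hbv).resolve_left hbt

theorem eventually_eq_zero_of_hasDerivWithinAt_smul_succ {m : ℕ} {b : Fin m → 𝕜 → 𝕜}
    {e : 𝕜 → Fin (m + 1) → E} (hs : UniqueDiffOn 𝕜 s)
    (hb : ∀ i, ContinuousWithinAt (b i) s t₀) (hb₀ : ∀ i, b i t₀ ≠ 0)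
    (he : ∀ t ∈ s, ∀ i : Fin m, HasDerivWithinAt (e · i.castSucc) (b i t • e t i.succ) s t)
    (he₀ : ∀ᶠ t in 𝓝[s] t₀, e t 0 = 0) :
    ∀ᶠ t in 𝓝[s] t₀, e t = 0 := by
  have coord_eq_zero (i : Fin (m + 1)) : ∀ᶠ t in 𝓝[s] t₀, e t i = 0 := by
    induction i using Fin.induction with
    | zero => exact he₀
    | succ i ih =>
      exact eventually_eq_zero_of_hasDerivWithinAt_smul hs (hb i) (hb₀ i) (fun t ht => he t ht i) ih
  exact (eventually_all.2 coord_eq_zero).mono fun t => funext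

end LinearChain

theorem norm_snoc_smul_succ_le {𝕜 F : Type*} [NormedField 𝕜] [SeminormedAddCommGroup F]
    [NormedSpace 𝕜 F] {m : ℕ} {c : Fin m → 𝕜} {z : Fin (m + 1) → F} {w : F} {L : ℝ}
    (hw : ‖w‖ ≤ L * ‖z‖) :
    ‖(Fin.snoc (fun i => c i • z i.succ) w : Fin (m + 1) → F)‖ ≤ max ‖c‖ L * ‖z‖ := by
  refine (pi_norm_le_iff_of_nonneg (by positivity)).2 (Fin.forall_fin_succ'.2 ⟨fun i => ?_, ?_⟩)
  · calc ‖(Fin.snoc (fun i => c i • z i.succ) w : Fin (m + 1) → F) i.castSucc‖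
        = ‖c i‖ * ‖z i.succ‖ := by rw [Fin.snoc_castSucc, norm_smul]
      _ ≤ max ‖c‖ L * ‖z‖ := by
        gcongr
        exacts [(norm_le_pi_norm c i).trans (le_max_left _ _), norm_le_pi_norm z _]
  · calc ‖(Fin.snoc (fun i => c i • z i.succ) w : Fin (m + 1) → F) (Fin.last m)‖
        = ‖w‖ := by rw [Fin.snoc_last]
      _ ≤ L * ‖z‖ := hw
      _ ≤ max ‖c‖ L * ‖z‖ := by gcongr; exact le_max_right _ _

section Gronwall

variable {E : Type*} [NormedAddCommGroup E] [NormedSpace ℝ E] {t₀ t₁ : ℝ}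

theorem eqOn_zero_of_norm_hasDerivWithinAt_le {u u' : ℝ → E} {K : ℝ}
    (hu : ∀ t ∈ Icc t₀ t₁, HasDerivWithinAt u (u' t) (Icc t₀ t₁) t) (hu₀ : u t₀ = 0)
    (hu' : ∀ t ∈ Icc t₀ t₁, ‖u' t‖ ≤ K * ‖u t‖) :
    EqOn u 0 (Icc t₀ t₁) :=
  eq_zero_of_abs_deriv_le_mul_abs_self_of_eq_zero_right (fun t ht => (hu t ht).continuousWithinAt)
    (fun t ht => (hu t (Ico_subset_Icc_self ht)).mono_of_mem_nhdsWithin (Icc_mem_nhdsGE_of_mem ht))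
    hu₀ (fun t ht => hu' t (Ico_subset_Icc_self ht))

theorem eqOn_zero_of_hasDerivWithinAt_smul_succ {m : ℕ} {b : Fin m → ℝ → ℝ}
    {e : ℝ → Fin (m + 1) → E} {d : ℝ → E} {L : ℝ} (ht : t₀ < t₁)
    (hb : ∀ i, ContinuousOn (b i) (Icc t₀ t₁)) (hb₀ : ∀ i, b i t₀ ≠ 0)
    (he : ∀ t ∈ Icc t₀ t₁, ∀ i : Fin m,
      HasDerivWithinAt (e · i.castSucc) (b i t • e t i.succ) (Icc t₀ t₁) t)
    (hd : ∀ t ∈ Icc t₀ t₁, HasDerivWithinAt (e · (Fin.last m)) (d t) (Icc t₀ t₁) t)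
    (hdL : ∀ t ∈ Icc t₀ t₁, ‖d t‖ ≤ L * ‖e t‖) (he₀ : ∀ t ∈ Icc t₀ t₁, e t 0 = 0) :
    EqOn e 0 (Icc t₀ t₁) := by
  have ht₀ : t₀ ∈ Icc t₀ t₁ := left_mem_Icc.2 ht.le
  have initial_eq_zero : e t₀ = 0 :=
    (eventually_eq_zero_of_hasDerivWithinAt_smul_succ (uniqueDiffOn_Icc ht)
      (fun i => hb i t₀ ht₀) hb₀ he (eventually_mem_nhdsWithin.mono he₀)).self_of_nhdsWithin ht₀
  obtain ⟨C, hC⟩ : ∃ C, ∀ t ∈ Icc t₀ t₁, ‖(b · t)‖ ≤ C :=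
    isCompact_Icc.exists_bound_of_continuousOn (continuousOn_pi.2 hb)
  have he' (t : ℝ) (hts : t ∈ Icc t₀ t₁) : HasDerivWithinAt e
      (Fin.snoc (fun i => b i t • e t i.succ) (d t)) (Icc t₀ t₁) t :=
    hasDerivWithinAt_pi.2 <| Fin.forall_fin_succ'.2
      ⟨fun i => by simpa only [Fin.snoc_castSucc] using he t hts i,
        by simpa only [Fin.snoc_last] using hd t hts⟩
  refine eqOn_zero_of_norm_hasDerivWithinAt_le (K := max C L) he' initial_eq_zero fun t hts => ?_
  calc ‖(Fin.snoc (fun i => b i t • e t i.succ) (d t) : Fin (m + 1) → E)‖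
      ≤ max ‖(b · t)‖ L * ‖e t‖ := norm_snoc_smul_succ_le (hdL t hts)
    _ ≤ max C L * ‖e t‖ := by gcongr; exact hC t hts

end Gronwall

section TriangularSystem

variable {E : Type*} [NormedAddCommGroup E] [NormedSpace ℝ E] {m : ℕ}

/-- `x` solves on `s` the triangular system `ẋᵢ = aᵢ(t, x₀) • xᵢ₊₁ + fᵢ(t, x₀)` for `i < m`,
`ẋₘ = g(t, x)`; this is the condition satisfied by both trajectories that `stmt3_general` compares.
Coordinates take values in a normed space `E` and are numbered from `0`, so `a i` and `f i` are the
paper's `aᵢ₊₂` and `fᵢ₊₁`. -/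
structure IsTriangularSolution (a : Fin m → ℝ → E → ℝ) (f : Fin m → ℝ → E → E)
    (g : ℝ → (Fin (m + 1) → E) → E) (s : Set ℝ) (x : ℝ → Fin (m + 1) → E) : Prop where
  hasDerivWithinAt_castSucc : ∀ t ∈ s, ∀ i : Fin m,
    HasDerivWithinAt (x · i.castSucc) (a i t (x t 0) • x t i.succ + f i t (x t 0)) s t
  hasDerivWithinAt_last : ∀ t ∈ s, HasDerivWithinAt (x · (Fin.last m)) (g t (x t)) s t

namespace IsTriangularSolution

variable {a : Fin m → ℝ → E → ℝ} {f : Fin m → ℝ → E → E} {g : ℝ → (Fin (m + 1) → E) → E}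
  {s : Set ℝ} {x y : ℝ → Fin (m + 1) → E}

theorem continuousOn (hx : IsTriangularSolution a f g s x) : ContinuousOn x s :=
  continuousOn_pi.2 <| Fin.forall_fin_succ'.2
    ⟨fun i t ht => (hx.hasDerivWithinAt_castSucc t ht i).continuousWithinAt,
      fun t ht => (hx.hasDerivWithinAt_last t ht).continuousWithinAt⟩

theorem hasDerivWithinAt_sub_castSucc (hx : IsTriangularSolution a f g s x)
    (hy : IsTriangularSolution a f g s y) {t : ℝ} (ht : t ∈ s) (hxy : x t 0 = y t 0) (i : Fin m) :
    HasDerivWithinAt (fun u => x u i.castSucc - y u i.castSucc)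
      (a i t (x t 0) • (x t i.succ - y t i.succ)) s t := by
  have h := (hx.hasDerivWithinAt_castSucc t ht i).fun_sub (hy.hasDerivWithinAt_castSucc t ht i)
  rwa [← hxy, add_sub_add_right_eq_sub, ← smul_sub] at h

theorem exists_norm_sub_le_mul (hx : IsTriangularSolution a f g s x)
    (hy : IsTriangularSolution a f g s y) (hs : IsCompact s)
    (hg : ∀ R > (0 : ℝ), ∃ L : ℝ, ∀ t ∈ s, ∀ z₁ z₂ : Fin (m + 1) → E,
      ‖z₁‖ ≤ R → ‖z₂‖ ≤ R → ‖g t z₁ - g t z₂‖ ≤ L * ‖z₁ - z₂‖) :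
    ∃ L : ℝ, ∀ t ∈ s, ‖g t (x t) - g t (y t)‖ ≤ L * ‖x t - y t‖ := by
  obtain ⟨Rx, hRx⟩ := hs.exists_bound_of_continuousOn hx.continuousOn
  obtain ⟨Ry, hRy⟩ := hs.exists_bound_of_continuousOn hy.continuousOn
  obtain ⟨L, hL⟩ := hg (max (max Rx Ry) 1) (by positivity)
  exact ⟨L, fun t ht => hL t ht _ _ ((hRx t ht).trans (by simp)) ((hRy t ht).trans (by simp))⟩

theorem of_hasDerivWithinAt_ite (hm : 1 < m + 1) {a f : ℕ → ℝ → ℝ → ℝ}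
    {g : ℝ → (Fin (m + 1) → ℝ) → ℝ} {s : Set ℝ} {x : ℝ → Fin (m + 1) → ℝ}
    (hx : ∀ t ∈ s, ∀ i : Fin (m + 1), HasDerivWithinAt (fun u => x u i)
      (if (i : ℕ) = m then g t (x t)
       else a ((i : ℕ) + 2) t (x t 0) * x t (i + ⟨1, hm⟩) + f ((i : ℕ) + 1) t (x t 0)) s t) :
    IsTriangularSolution (fun i => a (i + 2)) (fun i => f (i + 1)) g s x where
  hasDerivWithinAt_castSucc t ht i := by
    -- Addition in `Fin (m + 1)` is modular, but wraps around only at the last index.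
    have i_add_one : i.castSucc + ⟨1, hm⟩ = i.succ := by
      ext
      simp [Fin.val_add, Nat.mod_eq_of_lt]
    simpa [i.isLt.ne, i_add_one] using hx t ht i.castSucc
  hasDerivWithinAt_last t ht := by simpa using hx t ht (Fin.last m)

end IsTriangularSolution

theorem stmt3_general {a : Fin m → ℝ → E → ℝ} {f : Fin m → ℝ → E → E}
    {g : ℝ → (Fin (m + 1) → E) → E} {t₀ τ : ℝ} {x y : ℝ → Fin (m + 1) → E} (ht : t₀ < τ)
    (ha : ∀ i, ContinuousOn (fun p : ℝ × E => a i p.1 p.2) (Icc t₀ τ ×ˢ univ))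
    (hg : ∀ R > (0 : ℝ), ∃ L : ℝ, ∀ t ∈ Icc t₀ τ, ∀ z₁ z₂ : Fin (m + 1) → E,
      ‖z₁‖ ≤ R → ‖z₂‖ ≤ R → ‖g t z₁ - g t z₂‖ ≤ L * ‖z₁ - z₂‖)
    (hx : IsTriangularSolution a f g (Icc t₀ τ) x) (hy : IsTriangularSolution a f g (Icc t₀ τ) y)
    (hout : ∀ t ∈ Icc t₀ τ, x t 0 = y t 0) (ha₀ : ∀ i, a i t₀ (x t₀ 0) ≠ 0) :
    EqOn x y (Icc t₀ τ) := by
  obtain ⟨L, hL⟩ := hx.exists_norm_sub_le_mul hy isCompact_Icc hg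
  have ha_path (i : Fin m) : ContinuousOn (fun t => a i t (x t 0)) (Icc t₀ τ) :=
    (ha i).comp (continuousOn_id.prodMk (continuousOn_pi.1 hx.continuousOn 0))
      fun t hts => ⟨hts, mem_univ _⟩
  have sub_eq_zero_on : EqOn (x - y) 0 (Icc t₀ τ) :=
    eqOn_zero_of_hasDerivWithinAt_smul_succ ht ha_path ha₀
      (fun t hts => hx.hasDerivWithinAt_sub_castSucc hy hts (hout t hts))
      (fun t hts => (hx.hasDerivWithinAt_last t hts).fun_sub (hy.hasDerivWithinAt_last t hts))
      hL (fun t hts => sub_eq_zero.2 (hout t hts))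
  exact fun t hts => sub_eq_zero.1 (sub_eq_zero_on hts)

end TriangularSystem

theorem stmt3 (n : ℕ) (hn : 2 ≤ n) (t0 τ : ℝ) (ht : t0 < τ)
    (a : ℕ → ℝ → ℝ → ℝ) (f : ℕ → ℝ → ℝ → ℝ) (fn : ℝ → (Fin n → ℝ) → ℝ)
    (ha_cont : ∀ l, 2 ≤ l → l ≤ n →
      ContinuousOn (fun p : ℝ × ℝ => a l p.1 p.2) (Set.Icc t0 τ ×ˢ Set.univ))
    (hf_cont : ∀ l, 1 ≤ l → l ≤ n - 1 →
      ContinuousOn (fun p : ℝ × ℝ => f l p.1 p.2) (Set.Icc t0 τ ×ˢ Set.univ))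
    (hfn_cont : ContinuousOn (fun p : ℝ × (Fin n → ℝ) => fn p.1 p.2)
      (Set.Icc t0 τ ×ˢ Set.univ))
    (hfn_lip : ∀ R > (0:ℝ), ∃ L : ℝ, ∀ t ∈ Set.Icc t0 τ, ∀ z1 z2 : Fin n → ℝ,
      ‖z1‖ ≤ R → ‖z2‖ ≤ R → |fn t z1 - fn t z2| ≤ L * ‖z1 - z2‖)
    (x xb : ℝ → (Fin n → ℝ))
    (hx : ∀ t ∈ Set.Icc t0 τ, ∀ i : Fin n,
      HasDerivWithinAt (fun s => x s i)
        (if (i : ℕ) = n - 1 then fn t (x t)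
         else a ((i : ℕ) + 2) t (x t ⟨0, by omega⟩) * x t (i + ⟨1, by omega⟩)
           + f ((i : ℕ) + 1) t (x t ⟨0, by omega⟩))
        (Set.Icc t0 τ) t)
    (hxb : ∀ t ∈ Set.Icc t0 τ, ∀ i : Fin n,
      HasDerivWithinAt (fun s => xb s i)
        (if (i : ℕ) = n - 1 then fn t (xb t)
         else a ((i : ℕ) + 2) t (xb t ⟨0, by omega⟩) * xb t (i + ⟨1, by omega⟩)
           + f ((i : ℕ) + 1) t (xb t ⟨0, by omega⟩))
        (Set.Icc t0 τ) t)
    (hout : ∀ t ∈ Set.Icc t0 τ, x t ⟨0, by omega⟩ = xb t ⟨0, by omega⟩)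
    (ha0 : ∀ l, 2 ≤ l → l ≤ n → a l t0 (x t0 ⟨0, by omega⟩) ≠ 0) :
    (∀ t ∈ Set.Icc t0 τ, x t = xb t) ∧ x t0 = xb t0 := by
  obtain ⟨m, rfl⟩ : ∃ m, n = m + 1 := ⟨n - 1, by omega⟩
  have h : EqOn x xb (Icc t0 τ) :=
    stmt3_general ht (fun i => ha_cont (i + 2) (by omega) (by omega)) hfn_lip
      (.of_hasDerivWithinAt_ite hn hx)
      (.of_hasDerivWithinAt_ite hn hxb) hout
      (fun i => ha0 (i + 2) (by omega) (by omega))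
  exact ⟨h, h (left_mem_Icc.2 ht.le)⟩
end

section
/- Let x be a solution of the system with output y, and suppose that Ψ(t) is invertible for every t ∈ (t0, τ]. Then for every t ∈ (t0, τ]: x(t0) = Ψ(t)⁻¹ ( ∫_{t0}^t Φ(ρ)ᵀ C(ρ)ᵀ y(ρ) dρ − Ξ(t; x) ). -/
open MeasureTheory Matrix Set Filter Topology

noncomputable section

/-- `x` is a solution of `ẋ = A(t)x + g(t,x)` on `[t0, τ]` (integral form, componentwise). -/
def IsSolution (n : ℕ) (t0 τ : ℝ) (A : ℝ → Matrix (Fin n) (Fin n) ℝ)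
    (g : ℝ → (Fin n → ℝ) → (Fin n → ℝ)) (x : ℝ → (Fin n → ℝ)) : Prop :=
  ContinuousOn x (Set.Icc t0 τ) ∧
    ∀ t ∈ Set.Icc t0 τ, ∀ i : Fin n,
      x t i = x t0 i + ∫ s in t0..t, ((A s).mulVec (x s) i + g s (x s) i)

/-- `Φ` is the fundamental matrix of `ẋ = A(t)x` on `[t0, τ]`. -/
def IsFundamental (n : ℕ) (t0 τ : ℝ) (A : ℝ → Matrix (Fin n) (Fin n) ℝ)
    (Φ : ℝ → Matrix (Fin n) (Fin n) ℝ) : Prop :=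
  (∀ i j : Fin n, ContinuousOn (fun t => Φ t i j) (Set.Icc t0 τ)) ∧
    ∀ t ∈ Set.Icc t0 τ, ∀ i j : Fin n,
      Φ t i j = (1 : Matrix (Fin n) (Fin n) ℝ) i j + ∫ s in t0..t, (A s * Φ s) i j

/-- `Ψ(t) = ∫_{t0}^t Φ(s)ᵀ C(s)ᵀ C(s) Φ(s) ds` (entrywise integral). -/
def Psi (n k0 : ℕ) (t0 : ℝ) (C : ℝ → Matrix (Fin k0) (Fin n) ℝ)
    (Φ : ℝ → Matrix (Fin n) (Fin n) ℝ) (t : ℝ) : Matrix (Fin n) (Fin n) ℝ :=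
  fun i j => ∫ s in t0..t, ((Φ s)ᵀ * (C s)ᵀ * C s * Φ s) i j

/-- `Ξ(t; z) = ∫_{t0}^t Φ(ρ)ᵀ C(ρ)ᵀ C(ρ) Φ(ρ) (∫_{t0}^ρ Φ(s)⁻¹ g(s, z(s)) ds) dρ`. -/
def Xi (n k0 : ℕ) (t0 : ℝ) (C : ℝ → Matrix (Fin k0) (Fin n) ℝ)
    (Φ : ℝ → Matrix (Fin n) (Fin n) ℝ) (g : ℝ → (Fin n → ℝ) → (Fin n → ℝ))
    (z : ℝ → (Fin n → ℝ)) (t : ℝ) : Fin n → ℝ :=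
  fun i => ∫ ρ in t0..t,
    ((Φ ρ)ᵀ * (C ρ)ᵀ * C ρ * Φ ρ).mulVec
      (fun i' => ∫ s in t0..ρ, ((Φ s)⁻¹).mulVec (g s (z s)) i') i

/-- The map `F_T(t; z)`. -/
def Fmap (n k0 : ℕ) (t0 : ℝ) (C : ℝ → Matrix (Fin k0) (Fin n) ℝ)
    (Φ : ℝ → Matrix (Fin n) (Fin n) ℝ) (g : ℝ → (Fin n → ℝ) → (Fin n → ℝ))
    (y : ℝ → (Fin k0 → ℝ)) (T : ℝ) (z : ℝ → (Fin n → ℝ)) (t : ℝ) : Fin n → ℝ :=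
  (Φ t).mulVec
      ((Psi n k0 t0 C Φ T)⁻¹.mulVec
        ((fun i => ∫ ρ in t0..T, ((Φ ρ)ᵀ * (C ρ)ᵀ).mulVec (y ρ) i)
          - Xi n k0 t0 C Φ g z T))
    + (Φ t).mulVec (fun i => ∫ ρ in t0..t, ((Φ ρ)⁻¹).mulVec (g ρ (z ρ)) i)

/-- supremum norm of `f` over `[a, b]`. -/
def supN (n : ℕ) (a b : ℝ) (f : ℝ → (Fin n → ℝ)) : ℝ :=
  ⨆ t : Set.Icc a b, ‖f (t : ℝ)‖

/-- Regularity of the data `A`, `C`, `g` on `[t0, τ]`:  `A`, `C` measurable and bounded;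
`g` measurable in `t`, continuous in `x`, bounded on bounded sets. -/
def RegularData (n k0 : ℕ) (t0 τ : ℝ) (A : ℝ → Matrix (Fin n) (Fin n) ℝ)
    (C : ℝ → Matrix (Fin k0) (Fin n) ℝ)
    (g : ℝ → (Fin n → ℝ) → (Fin n → ℝ)) : Prop :=
  (∀ i j, Measurable fun t => A t i j) ∧
  (∃ M : ℝ, ∀ t ∈ Set.Icc t0 τ, ∀ i j, |A t i j| ≤ M) ∧
  (∀ i j, Measurable fun t => C t i j) ∧
  (∃ M : ℝ, ∀ t ∈ Set.Icc t0 τ, ∀ i j, |C t i j| ≤ M) ∧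
  (∀ v : Fin n → ℝ, ∀ i, Measurable fun t => g t v i) ∧
  (∀ t ∈ Set.Icc t0 τ, Continuous (g t)) ∧
  (∀ R > (0:ℝ), ∃ M : ℝ, ∀ t ∈ Set.Icc t0 τ, ∀ v : Fin n → ℝ, ‖v‖ ≤ R → ‖g t v‖ ≤ M)

/-!
In the variable `Φ⁻¹x` the linear part of the equation cancels: its derivative is `Φ⁻¹g(·, x)`
almost everywhere, so `x(t) = Φ(t)(x(t0) + ∫ Φ⁻¹g(s, x(s)) ds)`. Inserting this in `y = Cx` and
integrating `ΦᵀCᵀy` gives `Ψ(t)x(t0) + Ξ(t; x)`, which can be solved for `x(t0)` when `Ψ(t)` is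
invertible. Since the data are only measurable in time, differentiation is replaced by the calculus
of absolutely continuous functions, in a Banach algebra acting on a Banach space.
-/

section Primitive

open scoped Ring

variable {X Y Z : Type*} [PseudoMetricSpace X] [PseudoMetricSpace Y] [PseudoMetricSpace Z]
  {E : Type*} [NormedAddCommGroup E]
  {R : Type*} [NormedRing R]
  {a b : ℝ}

theorem absolutelyContinuousOnInterval_of_dist_le_add {f : ℝ → X} {g : ℝ → Y} {h : ℝ → Z}
    (hf : AbsolutelyContinuousOnInterval f a b) (hg : AbsolutelyContinuousOnInterval g a b)
    (K L : ℝ) (hle : ∀ s ∈ uIcc a b, ∀ t ∈ uIcc a b,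
      dist (h s) (h t) ≤ K * dist (f s) (f t) + L * dist (g s) (g t)) :
    AbsolutelyContinuousOnInterval h a b := by
  unfold AbsolutelyContinuousOnInterval at hf hg ⊢
  refine squeeze_zero' (.of_forall fun _ ↦ Finset.sum_nonneg fun _ _ ↦ dist_nonneg) ?_
    (by simpa using (hf.const_mul K).add (hg.const_mul L))
  filter_upwards [mem_inf_of_right (mem_principal_self _)] with I hI
  rw [Finset.mul_sum, Finset.mul_sum, ← Finset.sum_add_distrib]
  exact Finset.sum_le_sum fun i hi ↦ hle _ (hI.1 i hi).1 _ (hI.1 i hi).2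

theorem absolutelyContinuousOnInterval_of_dist_le_mul {f : ℝ → X} {h : ℝ → Z}
    (hf : AbsolutelyContinuousOnInterval f a b) (K : ℝ)
    (hle : ∀ s ∈ uIcc a b, ∀ t ∈ uIcc a b, dist (h s) (h t) ≤ K * dist (f s) (f t)) :
    AbsolutelyContinuousOnInterval h a b :=
  absolutelyContinuousOnInterval_of_dist_le_add hf hf K 0 (by simpa using hle)

theorem absolutelyContinuousOnInterval_smul [Module R E] [IsBoundedSMul R E]
    {f : ℝ → R} {g : ℝ → E}
    (hf : AbsolutelyContinuousOnInterval f a b) (hg : AbsolutelyContinuousOnInterval g a b) :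
    AbsolutelyContinuousOnInterval (fun t ↦ f t • g t) a b := by
  obtain ⟨K, hK⟩ := hf.exists_bound
  obtain ⟨L, hL⟩ := hg.exists_bound
  refine absolutelyContinuousOnInterval_of_dist_le_add hf hg L K fun s hs t ht ↦ ?_
  calc dist (f s • g s) (f t • g t)
      ≤ dist (f s • g s) (f t • g s) + dist (f t • g s) (f t • g t) := dist_triangle _ _ _
    _ ≤ dist (f s) (f t) * ‖g s‖ + ‖f t‖ * dist (g s) (g t) := by
        simpa only [dist_zero_right] using
          add_le_add (dist_pair_smul (f s) (f t) (g s)) (dist_smul_pair (f t) (g s) (g t))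
    _ ≤ L * dist (f s) (f t) + K * dist (g s) (g t) := by
        rw [mul_comm]
        gcongr
        exacts [hL s hs, hK t ht]

theorem absolutelyContinuousOnInterval_ringInverse [HasSummableGeomSeries R] {f : ℝ → R}
    (hf : AbsolutelyContinuousOnInterval f a b) (hu : ∀ t ∈ uIcc a b, IsUnit (f t)) :
    AbsolutelyContinuousOnInterval (fun t ↦ (f t)⁻¹ʳ) a b := by
  have hcont : ContinuousOn (fun t ↦ (f t)⁻¹ʳ) (uIcc a b) := fun t ht ↦ by
    obtain ⟨u, hu⟩ := hu t ht
    exact (hu ▸ NormedRing.inverse_continuousAt u : ContinuousAt Ring.inverse (f t))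
      |>.comp_continuousWithinAt (hf.continuousOn t ht)
  obtain ⟨K, hK⟩ := isCompact_uIcc.exists_bound_of_continuousOn hcont
  refine absolutelyContinuousOnInterval_of_dist_le_mul hf (K * K) fun s hs t ht ↦ ?_
  have hK₀ : 0 ≤ K := (norm_nonneg _).trans (hK s hs)
  calc dist (f s)⁻¹ʳ (f t)⁻¹ʳ = ‖(f s)⁻¹ʳ * (f t - f s) * (f t)⁻¹ʳ‖ := by
        rw [dist_eq_norm, Ring.inverse_sub_inverse (iff_of_true (hu s hs) (hu t ht))]
    _ ≤ ‖(f s)⁻¹ʳ‖ * ‖f t - f s‖ * ‖(f t)⁻¹ʳ‖ := norm_mul₃_le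
    _ ≤ K * ‖f t - f s‖ * K := by
        gcongr
        exacts [hK s hs, hK t ht]
    _ = K * K * dist (f s) (f t) := by rw [dist_comm, dist_eq_norm]; ring

variable [NormedSpace ℝ E]

theorem absolutelyContinuousOnInterval_integral {f : ℝ → E}
    (hf : IntervalIntegrable f volume a b) :
    AbsolutelyContinuousOnInterval (fun t ↦ ∫ s in a..t, f s) a b := by
  refine absolutelyContinuousOnInterval_of_dist_le_mul
    (hf.norm.absolutelyContinuousOnInterval_intervalIntegral left_mem_uIcc) 1 fun s hs t ht ↦ ?_
  have hsub : ∀ r ∈ uIcc a b, IntervalIntegrable f volume a r := fun r hr ↦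
    hf.mono_set (uIcc_subset_uIcc_left hr)
  rw [one_mul, dist_eq_norm, dist_eq_norm,
    intervalIntegral.integral_interval_sub_left (hsub s hs) (hsub t ht),
    intervalIntegral.integral_interval_sub_left (hsub s hs).norm (hsub t ht).norm]
  exact intervalIntegral.norm_integral_le_abs_integral_norm

/-- `F` is a Carathéodory primitive of `f` on the interval with endpoints `a` and `b`: it is
absolutely continuous there with derivative `f` almost everywhere. This is encoded by the integral
equation, the form in which solutions of `ẋ = f` with merely integrable right-hand side are
given. -/
def IsPrimitiveOn (F f : ℝ → E) (a b : ℝ) : Prop :=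
  IntervalIntegrable f volume a b ∧ ∀ t ∈ uIcc a b, F t = F a + ∫ s in a..t, f s

namespace IsPrimitiveOn

theorem congr {F G f g : ℝ → E} (h : IsPrimitiveOn F f a b) (hFG : EqOn F G (uIcc a b))
    (hfg : EqOn f g (uIcc a b)) : IsPrimitiveOn G g a b :=
  ⟨h.1.congr (hfg.mono uIoc_subset_uIcc), fun t ht ↦ by
    rw [← hFG ht, ← hFG left_mem_uIcc, h.2 t ht,
      intervalIntegral.integral_congr (hfg.mono (uIcc_subset_uIcc_left ht))]⟩

protected theorem absolutelyContinuousOnInterval {F f : ℝ → E} (h : IsPrimitiveOn F f a b) :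
    AbsolutelyContinuousOnInterval F a b :=
  absolutelyContinuousOnInterval_of_dist_le_mul (absolutelyContinuousOnInterval_integral h.1) 1
    fun s hs t ht ↦ by rw [h.2 s hs, h.2 t ht, dist_add_left, one_mul]

protected theorem continuousOn {F f : ℝ → E} (h : IsPrimitiveOn F f a b) :
    ContinuousOn F (uIcc a b) :=
  h.absolutelyContinuousOnInterval.continuousOn

variable [CompleteSpace E]

theorem ae_hasDerivAt {F f : ℝ → E} (h : IsPrimitiveOn F f a b) :
    ∀ᵐ t, t ∈ uIcc a b → HasDerivAt F (f t) t := by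
  filter_upwards [h.1.ae_hasDerivAt_integral, Measure.ae_ne volume (a ⊓ b),
    Measure.ae_ne volume (a ⊔ b)] with t hderiv hmin hmax ht
  have hnhds : uIcc a b ∈ 𝓝 t := Icc_mem_nhds (ht.1.lt_of_ne' hmin) (ht.2.lt_of_ne hmax)
  exact ((hderiv ht a left_mem_uIcc).const_add (F a)).congr_of_eventuallyEq
    (eventually_of_mem hnhds h.2)

theorem of_ae_hasDerivAt {F f : ℝ → E} (hF : AbsolutelyContinuousOnInterval F a b)
    (hf : IntervalIntegrable f volume a b) (hderiv : ∀ᵐ t, t ∈ uIcc a b → HasDerivAt F (f t) t) :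
    IsPrimitiveOn F f a b := by
  obtain ⟨c, hc⟩ := (hF.fun_sub (absolutelyContinuousOnInterval_integral hf))
    |>.const_of_ae_hasDerivAt_zero <| by
      filter_upwards [hderiv, hf.ae_hasDerivAt_integral] with t hFt hft ht
      simpa using (hFt ht).fun_sub (hft ht a left_mem_uIcc)
  have hca : F a = c := by simpa using hc a left_mem_uIcc
  exact ⟨hf, fun t ht ↦ by rw [hca, ← hc t ht, sub_add_cancel]⟩

variable [NormedAlgebra ℝ R] [CompleteSpace R]

theorem smul [Module R E] [IsBoundedSMul R E] [IsScalarTower ℝ R E] {F f : ℝ → R} {G g : ℝ → E}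
    (hF : IsPrimitiveOn F f a b) (hG : IsPrimitiveOn G g a b) :
    IsPrimitiveOn (fun t ↦ F t • G t) (fun t ↦ F t • g t + f t • G t) a b := by
  refine of_ae_hasDerivAt (absolutelyContinuousOnInterval_smul hF.absolutelyContinuousOnInterval
    hG.absolutelyContinuousOnInterval)
    ((hG.1.continuousOn_smul hF.continuousOn).add (hF.1.smul_continuousOn hG.continuousOn)) ?_
  filter_upwards [hF.ae_hasDerivAt, hG.ae_hasDerivAt] with t hFt hGt ht
  exact (hFt ht).fun_smul (hGt ht)

theorem ringInverse {F f : ℝ → R} (hF : IsPrimitiveOn F f a b) (hu : ∀ t ∈ uIcc a b, IsUnit (F t)) :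
    IsPrimitiveOn (fun t ↦ (F t)⁻¹ʳ) (fun t ↦ -((F t)⁻¹ʳ * f t * (F t)⁻¹ʳ)) a b := by
  have hinv := absolutelyContinuousOnInterval_ringInverse hF.absolutelyContinuousOnInterval hu
  refine of_ae_hasDerivAt hinv
    ((hF.1.continuousOn_mul hinv.continuousOn).mul_continuousOn hinv.continuousOn).neg ?_
  filter_upwards [hF.ae_hasDerivAt] with t hFt ht
  obtain ⟨u, hu⟩ := hu t ht
  have hinv_deriv := hasFDerivAt_ringInverse (𝕜 := ℝ) u
  rw [hu] at hinv_deriv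
  simpa [← hu, Function.comp_def] using hinv_deriv.comp_hasDerivAt t (hFt ht)

-- Variation of constants: in `Φ⁻¹x` the linear part of the equation cancels.
theorem ringInverse_smul [Module R E] [IsBoundedSMul R E] [IsScalarTower ℝ R E]
    {A Φ : ℝ → R} {x f : ℝ → E} (hΦ : IsPrimitiveOn Φ (fun t ↦ A t * Φ t) a b)
    (hu : ∀ t ∈ uIcc a b, IsUnit (Φ t)) (hx : IsPrimitiveOn x (fun t ↦ A t • x t + f t) a b) :
    IsPrimitiveOn (fun t ↦ (Φ t)⁻¹ʳ • x t) (fun t ↦ (Φ t)⁻¹ʳ • f t) a b := by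
  refine ((hΦ.ringInverse hu).smul hx).congr (eqOn_refl _ _) fun t ht ↦ ?_
  have hcancel : (Φ t)⁻¹ʳ * (A t * Φ t) * (Φ t)⁻¹ʳ = (Φ t)⁻¹ʳ * A t := by
    rw [← mul_assoc, mul_assoc, Ring.mul_inverse_cancel _ (hu t ht), mul_one]
  simp only [hcancel, smul_add, neg_smul, mul_smul]
  abel

end IsPrimitiveOn

end Primitive

section Measurability

theorem aemeasurable_comp_of_continuous_of_measurable {α E F : Type*} [MeasurableSpace α]
    {μ : Measure α} {s : Set α} (hs : MeasurableSet s)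
    [TopologicalSpace E] [TopologicalSpace.MetrizableSpace E] [SecondCountableTopology E]
    [MeasurableSpace E] [OpensMeasurableSpace E]
    [TopologicalSpace F] [TopologicalSpace.PseudoMetrizableSpace F] [MeasurableSpace F]
    [BorelSpace F]
    {g : α → E → F} (hcont : ∀ t ∈ s, Continuous (g t)) (hmeas : ∀ v, Measurable fun t ↦ g t v)
    {x : α → E} (hx : AEMeasurable x (μ.restrict s)) :
    AEMeasurable (fun t ↦ g t (x t)) (μ.restrict s) := by
  rw [aemeasurable_restrict_iff_comap_subtype hs] at hx ⊢
  have huncurry : Measurable (Function.uncurry fun (v : E) (t : s) ↦ g t v) :=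
    measurable_uncurry_of_continuous_of_measurable (fun t ↦ hcont t t.2)
      fun v ↦ (hmeas v).comp measurable_subtype_coe
  exact huncurry.comp_aemeasurable (hx.prodMk aemeasurable_id)

theorem intervalIntegrable_of_bounded {E : Type*} [NormedAddCommGroup E] {a b M : ℝ} (hab : a ≤ b)
    {f : ℝ → E} (hf : AEStronglyMeasurable f (volume.restrict (Icc a b)))
    (hM : ∀ t ∈ Icc a b, ‖f t‖ ≤ M) : IntervalIntegrable f volume a b :=
  (intervalIntegrable_iff_integrableOn_Icc_of_le hab).2 <|
    .of_bound (by simp) hf M (ae_restrict_of_forall_mem measurableSet_Icc hM)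

end Measurability

section Entrywise

variable {l m n : Type*} [Fintype m] {a b : ℝ} {F : Type*} [NormedAddCommGroup F]

theorem intervalIntegrable_fun_sum {ι : Type*} (s : Finset ι) {f : ι → ℝ → F}
    (hf : ∀ i ∈ s, IntervalIntegrable (f i) volume a b) :
    IntervalIntegrable (fun t ↦ ∑ i ∈ s, f i t) volume a b := by
  simpa only [Finset.sum_fn] using IntervalIntegrable.sum s hf

theorem intervalIntegrable_mul_apply_of_continuousOn {M : ℝ → Matrix l m ℝ} {N : ℝ → Matrix m n ℝ}
    (hM : ∀ i j, IntervalIntegrable (fun t ↦ M t i j) volume a b)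
    (hN : ∀ i j, ContinuousOn (fun t ↦ N t i j) (uIcc a b)) (i : l) (j : n) :
    IntervalIntegrable (fun t ↦ (M t * N t) i j) volume a b := by
  simp only [Matrix.mul_apply]
  exact intervalIntegrable_fun_sum _ fun k _ ↦ (hM i k).mul_continuousOn (hN k j)

theorem intervalIntegrable_transpose_mul_apply_of_continuousOn
    {M : ℝ → Matrix m l ℝ} {N : ℝ → Matrix m n ℝ}
    (hM : ∀ i j, ContinuousOn (fun t ↦ M t i j) (uIcc a b))
    (hN : ∀ i j, IntervalIntegrable (fun t ↦ N t i j) volume a b) (i : l) (j : n) :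
    IntervalIntegrable (fun t ↦ ((M t)ᵀ * N t) i j) volume a b := by
  simp only [Matrix.mul_apply, Matrix.transpose_apply]
  exact intervalIntegrable_fun_sum _ fun k _ ↦ (hN k j).continuousOn_mul (hM k i)

theorem intervalIntegrable_mulVec_apply_of_continuousOn {M : ℝ → Matrix l m ℝ} {v : ℝ → m → ℝ}
    (hM : ∀ i j, IntervalIntegrable (fun t ↦ M t i j) volume a b)
    (hv : ContinuousOn v (uIcc a b)) (i : l) :
    IntervalIntegrable (fun t ↦ (M t *ᵥ v t) i) volume a b := by
  simp only [Matrix.mulVec, dotProduct]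
  exact intervalIntegrable_fun_sum _ fun j _ ↦ (hM i j).mul_continuousOn (continuousOn_pi.1 hv j)

variable [NormedSpace ℝ F]

theorem linearMap_matrix_apply_eq_sum [Fintype n] [DecidableEq m] [DecidableEq n]
    (L : Matrix m n ℝ →ₗ[ℝ] F) (M : Matrix m n ℝ) :
    L M = ∑ i, ∑ j, M i j • L (Matrix.single i j 1) := by
  conv_lhs => rw [Matrix.matrix_eq_sum_single M]
  simp only [map_sum, ← map_smul, Matrix.smul_single, smul_eq_mul, mul_one]

theorem intervalIntegral_pi_apply [Fintype n] {v : ℝ → n → ℝ}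
    (hv : IntervalIntegrable v volume a b) (i : n) :
    (∫ t in a..b, v t) i = ∫ t in a..b, v t i :=
  ((ContinuousLinearMap.proj (R := ℝ) (φ := fun _ : n ↦ ℝ) i).intervalIntegral_comp_comm hv).symm

theorem intervalIntegrable_linearMap_matrix [Finite l] [Finite n] (L : Matrix l n ℝ →ₗ[ℝ] F)
    {M : ℝ → Matrix l n ℝ}
    (hM : ∀ i j, IntervalIntegrable (fun t ↦ M t i j) volume a b) :
    IntervalIntegrable (fun t ↦ L (M t)) volume a b := by
  classical
  cases nonempty_fintype l
  cases nonempty_fintype n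
  simp only [fun t ↦ linearMap_matrix_apply_eq_sum L (M t)]
  exact intervalIntegrable_fun_sum _ fun i _ ↦ intervalIntegrable_fun_sum _ fun j _ ↦
    (hM i j).smul_continuousOn continuousOn_const

theorem intervalIntegral_linearMap_matrix [Finite l] [Finite n] [CompleteSpace F]
    (L : Matrix l n ℝ →ₗ[ℝ] F) {M : ℝ → Matrix l n ℝ}
    (hM : ∀ i j, IntervalIntegrable (fun t ↦ M t i j) volume a b) :
    ∫ t in a..b, L (M t) = L (.of fun i j ↦ ∫ t in a..b, M t i j) := by
  classical
  cases nonempty_fintype l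
  cases nonempty_fintype n
  have hterm : ∀ i j, IntervalIntegrable (fun t ↦ M t i j • L (.single i j 1)) volume a b :=
    fun i j ↦ (hM i j).smul_continuousOn continuousOn_const
  simp only [fun t ↦ linearMap_matrix_apply_eq_sum L (M t)]
  rw [linearMap_matrix_apply_eq_sum L (.of _),
    intervalIntegral.integral_finsetSum fun i _ ↦ intervalIntegrable_fun_sum _ fun j _ ↦ hterm i j]
  refine Finset.sum_congr rfl fun i _ ↦ ?_
  rw [intervalIntegral.integral_finsetSum fun j _ ↦ hterm i j]
  simp only [intervalIntegral.integral_smul_const, Matrix.of_apply]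

end Entrywise

section Operator

open scoped Ring

instance isBoundedSMul_continuousLinearMap {𝕜 E : Type*} [NontriviallyNormedField 𝕜]
    [NormedAddCommGroup E] [NormedSpace 𝕜 E] : IsBoundedSMul (E →L[𝕜] E) E :=
  .of_norm_smul_le ContinuousLinearMap.le_opNorm

instance isScalarTower_continuousLinearMap {𝕜 E : Type*} [NontriviallyNormedField 𝕜]
    [NormedAddCommGroup E] [NormedSpace 𝕜 E] : IsScalarTower 𝕜 (E →L[𝕜] E) E :=
  ⟨fun _ _ _ ↦ rfl⟩

variable {n : Type*} [Fintype n] [DecidableEq n]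

/-- The algebra isomorphism sending a square matrix to the bounded operator `v ↦ M *ᵥ v`. It makes
Banach algebra calculus available for matrices: a norm on `Matrix n n ℝ` itself would induce a
topology that instance search does not identify with the existing product topology. -/
def mulVecCLM : Matrix n n ℝ ≃ₐ[ℝ] ((n → ℝ) →L[ℝ] (n → ℝ)) :=
  Matrix.toLinAlgEquiv'.trans (Module.End.toContinuousLinearMap _)

theorem mulVecCLM_smul (M : Matrix n n ℝ) (v : n → ℝ) : mulVecCLM M • v = M *ᵥ v :=
  rfl

theorem mulVecCLM_ringInverse {M : Matrix n n ℝ} (hM : IsUnit M) :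
    (mulVecCLM M)⁻¹ʳ = mulVecCLM M⁻¹ := by
  rw [Matrix.nonsing_inv_eq_ringInverse]
  obtain ⟨u, rfl⟩ := hM
  rw [Ring.inverse_unit]
  exact Ring.inverse_unit (Units.map (mulVecCLM (n := n)).toMonoidHom u)

end Operator

section System

open scoped Ring

variable {n k0 : ℕ} {t0 τ : ℝ} {A Φ : ℝ → Matrix (Fin n) (Fin n) ℝ}
  {C : ℝ → Matrix (Fin k0) (Fin n) ℝ} {g : ℝ → (Fin n → ℝ) → (Fin n → ℝ)} {x : ℝ → (Fin n → ℝ)}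

namespace RegularData

theorem intervalIntegrable_apply (hreg : RegularData n k0 t0 τ A C g) (ht : t0 ≤ τ)
    (i j : Fin n) : IntervalIntegrable (fun t ↦ A t i j) volume t0 τ := by
  obtain ⟨hmeas, ⟨M, hM⟩, -⟩ := hreg
  exact intervalIntegrable_of_bounded ht (hmeas i j).aestronglyMeasurable fun t htt ↦ hM t htt i j

theorem intervalIntegrable_gram_apply (hreg : RegularData n k0 t0 τ A C g) (ht : t0 ≤ τ)
    (i j : Fin n) : IntervalIntegrable (fun t ↦ ((C t)ᵀ * C t) i j) volume t0 τ := by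
  obtain ⟨-, -, hmeas, ⟨M, hM⟩, -⟩ := hreg
  simp only [Matrix.mul_apply, Matrix.transpose_apply]
  refine intervalIntegrable_fun_sum _ fun k _ ↦ intervalIntegrable_of_bounded (M := M * M) ht
    ((hmeas k i).mul (hmeas k j)).aestronglyMeasurable fun t htt ↦ ?_
  rw [norm_mul]
  exact mul_le_mul (hM t htt k i) (hM t htt k j) (abs_nonneg _)
    ((abs_nonneg _).trans (hM t htt k i))

theorem intervalIntegrable_comp (hreg : RegularData n k0 t0 τ A C g) (ht : t0 ≤ τ)
    (hx : ContinuousOn x (Icc t0 τ)) : IntervalIntegrable (fun t ↦ g t (x t)) volume t0 τ := by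
  obtain ⟨-, -, -, -, hmeas, hcont, hbdd⟩ := hreg
  obtain ⟨r, hr⟩ := isCompact_Icc.exists_bound_of_continuousOn hx
  obtain ⟨M, hM⟩ := hbdd (max r 1) (by positivity)
  refine intervalIntegrable_of_bounded ht ?_
    fun t htt ↦ hM t htt (x t) ((hr t htt).trans (le_max_left r 1))
  exact AEMeasurable.aestronglyMeasurable <|
    aemeasurable_comp_of_continuous_of_measurable measurableSet_Icc hcont
      (fun v ↦ measurable_pi_iff.2 (hmeas v)) (hx.aemeasurable measurableSet_Icc)

end RegularData

namespace IsFundamental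

theorem apply_left (hΦ : IsFundamental n t0 τ A Φ) (ht : t0 ≤ τ) : Φ t0 = 1 := by
  ext i j
  simpa using hΦ.2 t0 (left_mem_Icc.2 ht) i j

theorem isPrimitiveOn (hΦ : IsFundamental n t0 τ A Φ) (ht : t0 ≤ τ)
    (hA : ∀ i j, IntervalIntegrable (fun t ↦ A t i j) volume t0 τ) :
    IsPrimitiveOn (fun t ↦ mulVecCLM (Φ t)) (fun t ↦ mulVecCLM (A t) * mulVecCLM (Φ t)) t0 τ := by
  have hAΦ := intervalIntegrable_mul_apply_of_continuousOn hA (uIcc_of_le ht ▸ hΦ.1)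
  simp only [← map_mul]
  refine ⟨intervalIntegrable_linearMap_matrix mulVecCLM.toLinearMap hAΦ, fun t htt ↦ ?_⟩
  have hintegral := intervalIntegral_linearMap_matrix mulVecCLM.toLinearMap
    fun i j ↦ (hAΦ i j).mono_set (uIcc_subset_uIcc_left htt)
  simp only [AlgEquiv.toLinearMap_apply] at hintegral
  rw [hintegral, ← map_add, hΦ.apply_left ht]
  refine congrArg mulVecCLM (Matrix.ext fun i j ↦ ?_)
  exact hΦ.2 t (uIcc_of_le ht ▸ htt) i j

end IsFundamental

namespace IsSolution

theorem isPrimitiveOn (hx : IsSolution n t0 τ A g x) (ht : t0 ≤ τ)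
    (hA : ∀ i j, IntervalIntegrable (fun t ↦ A t i j) volume t0 τ)
    (hg : IntervalIntegrable (fun t ↦ g t (x t)) volume t0 τ) :
    IsPrimitiveOn x (fun t ↦ mulVecCLM (A t) • x t + g t (x t)) t0 τ := by
  have hint : IntervalIntegrable (fun t ↦ mulVecCLM (A t) • x t + g t (x t)) volume t0 τ :=
    ((intervalIntegrable_linearMap_matrix mulVecCLM.toLinearMap hA).smul_continuousOn
      (uIcc_of_le ht ▸ hx.1)).add hg
  refine ⟨hint, fun t htt ↦ funext fun i ↦ ?_⟩
  rw [Pi.add_apply, intervalIntegral_pi_apply (hint.mono_set (uIcc_subset_uIcc_left htt))]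
  exact hx.2 t (uIcc_of_le ht ▸ htt) i

theorem eq_fundamental_mulVec (hx : IsSolution n t0 τ A g x)
    (hA : ∀ i j, IntervalIntegrable (fun t ↦ A t i j) volume t0 τ)
    (hg : IntervalIntegrable (fun t ↦ g t (x t)) volume t0 τ)
    (hΦ : IsFundamental n t0 τ A Φ) (hΦinv : ∀ t ∈ Icc t0 τ, IsUnit (Φ t))
    {t : ℝ} (htt : t ∈ Icc t0 τ) :
    x t = Φ t *ᵥ (x t0 + fun i ↦ ∫ s in t0..t, ((Φ s)⁻¹ *ᵥ g s (x s)) i) := by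
  have ht : t0 ≤ τ := htt.1.trans htt.2
  rw [← uIcc_of_le ht] at hΦinv htt
  have hcoe : ∀ t ∈ uIcc t0 τ, ∀ v, (mulVecCLM (Φ t))⁻¹ʳ • v = (Φ t)⁻¹ *ᵥ v := fun t htt v ↦ by
    rw [mulVecCLM_ringInverse (hΦinv t htt), mulVecCLM_smul]
  have hprim : IsPrimitiveOn (fun t ↦ (Φ t)⁻¹ *ᵥ x t) (fun t ↦ (Φ t)⁻¹ *ᵥ g t (x t)) t0 τ :=
    ((hΦ.isPrimitiveOn ht hA).ringInverse_smul (fun t htt ↦ (hΦinv t htt).map mulVecCLM)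
      (hx.isPrimitiveOn ht hA hg)).congr
        (fun t htt ↦ hcoe t htt _) (fun t htt ↦ hcoe t htt _)
  have hinv : (Φ t)⁻¹ *ᵥ x t = x t0 + fun i ↦ ∫ s in t0..t, ((Φ s)⁻¹ *ᵥ g s (x s)) i := by
    refine (hprim.2 t htt).trans ?_
    beta_reduce
    rw [hΦ.apply_left ht, inv_one, one_mulVec]
    congr 1
    ext i
    exact intervalIntegral_pi_apply (hprim.1.mono_set (uIcc_subset_uIcc_left htt)) i
  rw [← hinv, mulVec_mulVec, mul_nonsing_inv _ ((isUnit_iff_isUnit_det _).1 (hΦinv t htt)),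
    one_mulVec]

end IsSolution

theorem Psi_mulVec_apply {t : ℝ}
    (hint : ∀ i j, IntervalIntegrable
      (fun ρ ↦ ((Φ ρ)ᵀ * (C ρ)ᵀ * C ρ * Φ ρ) i j) volume t0 t) (v : Fin n → ℝ) (i : Fin n) :
    (Psi n k0 t0 C Φ t *ᵥ v) i =
      ∫ ρ in t0..t, (((Φ ρ)ᵀ * (C ρ)ᵀ * C ρ * Φ ρ) *ᵥ v) i :=
  (intervalIntegral_linearMap_matrix
    (LinearMap.proj i ∘ₗ (Matrix.mulVecBilin ℝ ℝ).flip v) hint).symm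

theorem integral_output_eq_Psi_mulVec_add_Xi {y : ℝ → (Fin k0 → ℝ)}
    (hA : ∀ i j, IntervalIntegrable (fun t ↦ A t i j) volume t0 τ)
    (hC : ∀ i j, IntervalIntegrable (fun t ↦ ((C t)ᵀ * C t) i j) volume t0 τ)
    (hg : IntervalIntegrable (fun t ↦ g t (x t)) volume t0 τ)
    (hΦ : IsFundamental n t0 τ A Φ)
    (hΦinv : ∀ t ∈ Icc t0 τ, IsUnit (Φ t)) (hx : IsSolution n t0 τ A g x)
    (hy : ∀ t ∈ Icc t0 τ, y t = C t *ᵥ x t) {t : ℝ} (htt : t ∈ Icc t0 τ) :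
    (fun i ↦ ∫ ρ in t0..t, (((Φ ρ)ᵀ * (C ρ)ᵀ) *ᵥ y ρ) i) =
      Psi n k0 t0 C Φ t *ᵥ x t0 + Xi n k0 t0 C Φ g x t := by
  have ht : t0 ≤ τ := htt.1.trans htt.2
  have hsub : uIcc t0 t ⊆ Icc t0 τ := uIcc_of_le htt.1 ▸ Icc_subset_Icc_right htt.2
  have hΦcont : ∀ i j, ContinuousOn (fun ρ ↦ Φ ρ i j) (uIcc t0 t) := fun i j ↦ (hΦ.1 i j).mono hsub
  have hgain : ∀ i j, IntervalIntegrable (fun ρ ↦ ((Φ ρ)ᵀ * (C ρ)ᵀ * C ρ) i j) volume t0 t := by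
    simp only [Matrix.mul_assoc]
    exact intervalIntegrable_transpose_mul_apply_of_continuousOn hΦcont fun i j ↦
      (hC i j).mono_set (uIcc_of_le ht ▸ hsub)
  have hgram := intervalIntegrable_mul_apply_of_continuousOn hgain hΦcont
  have hpoint : ∀ ρ ∈ uIcc t0 t, ((Φ ρ)ᵀ * (C ρ)ᵀ * C ρ) *ᵥ x ρ = ((Φ ρ)ᵀ * (C ρ)ᵀ) *ᵥ y ρ :=
    fun ρ hρ ↦ by rw [hy ρ (hsub hρ), mulVec_mulVec]
  ext i
  have hout := (intervalIntegrable_mulVec_apply_of_continuousOn hgain (hx.1.mono hsub) i).congr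
    fun ρ hρ ↦ congrFun (hpoint ρ (uIoc_subset_uIcc hρ)) i
  have hfree := intervalIntegrable_mulVec_apply_of_continuousOn hgram
    (continuousOn_const (c := x t0)) i
  rw [Pi.add_apply, ← sub_eq_iff_eq_add', Psi_mulVec_apply hgram,
    ← intervalIntegral.integral_sub hout hfree]
  refine intervalIntegral.integral_congr fun ρ hρ ↦ ?_
  have hvar := hx.eq_fundamental_mulVec hA hg hΦ hΦinv (hsub hρ)
  rw [← hpoint ρ hρ, hvar, mulVec_mulVec, mulVec_add, Pi.add_apply, add_sub_cancel_left]

end System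

theorem stmt5_general (n k0 : ℕ) (t0 τ : ℝ)
    (A : ℝ → Matrix (Fin n) (Fin n) ℝ) (C : ℝ → Matrix (Fin k0) (Fin n) ℝ)
    (g : ℝ → (Fin n → ℝ) → (Fin n → ℝ)) (x : ℝ → (Fin n → ℝ))
    (hA : ∀ i j, IntervalIntegrable (fun t ↦ A t i j) volume t0 τ)
    (hC : ∀ i j, IntervalIntegrable (fun t ↦ ((C t)ᵀ * C t) i j) volume t0 τ)
    (hg : IntervalIntegrable (fun t ↦ g t (x t)) volume t0 τ)
    (Φ : ℝ → Matrix (Fin n) (Fin n) ℝ) (hΦ : IsFundamental n t0 τ A Φ)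
    (hΦinv : ∀ t ∈ Icc t0 τ, IsUnit (Φ t)) (hx : IsSolution n t0 τ A g x)
    (y : ℝ → (Fin k0 → ℝ)) (hy : ∀ t ∈ Icc t0 τ, y t = C t *ᵥ x t)
    (t : ℝ) (htt : t ∈ Icc t0 τ) (hΨ : IsUnit (Psi n k0 t0 C Φ t)) :
    x t0 = (Psi n k0 t0 C Φ t)⁻¹ *ᵥ
      ((fun i ↦ ∫ ρ in t0..t, (((Φ ρ)ᵀ * (C ρ)ᵀ) *ᵥ y ρ) i) - Xi n k0 t0 C Φ g x t) := by
  rw [integral_output_eq_Psi_mulVec_add_Xi hA hC hg hΦ hΦinv hx hy htt, add_sub_cancel_right,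
    mulVec_mulVec, nonsing_inv_mul _ ((isUnit_iff_isUnit_det _).1 hΨ), one_mulVec]

theorem stmt5 (n k0 : ℕ) (hn : 1 ≤ n) (hk0 : 1 ≤ k0) (t0 τ : ℝ) (ht : t0 < τ)
    (A : ℝ → Matrix (Fin n) (Fin n) ℝ) (C : ℝ → Matrix (Fin k0) (Fin n) ℝ)
    (g : ℝ → (Fin n → ℝ) → (Fin n → ℝ))
    (hreg : RegularData n k0 t0 τ A C g)
    (Φ : ℝ → Matrix (Fin n) (Fin n) ℝ) (hΦ : IsFundamental n t0 τ A Φ)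
    (hΦinv : ∀ t ∈ Set.Icc t0 τ, IsUnit (Φ t))
    (x : ℝ → (Fin n → ℝ)) (hx : IsSolution n t0 τ A g x)
    (y : ℝ → (Fin k0 → ℝ)) (hy : ∀ t ∈ Set.Icc t0 τ, y t = (C t).mulVec (x t))
    (hΨ : ∀ t ∈ Set.Ioc t0 τ, IsUnit (Psi n k0 t0 C Φ t)) :
    ∀ t ∈ Set.Ioc t0 τ,
      x t0 = (Psi n k0 t0 C Φ t)⁻¹.mulVec
        ((fun i => ∫ ρ in t0..t, ((Φ ρ)ᵀ * (C ρ)ᵀ).mulVec (y ρ) i)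
          - Xi n k0 t0 C Φ g x t) := by
  exact fun t htt ↦ stmt5_general n k0 t0 τ A C g x (hreg.intervalIntegrable_apply ht.le)
    (hreg.intervalIntegrable_gram_apply ht.le) (hreg.intervalIntegrable_comp ht.le hx.1)
    Φ hΦ hΦinv hx y hy t (Ioc_subset_Icc_self htt) (hΨ t htt)
end
end

section
/- Let x be a solution of the system with output y, and let T ∈ (t0, τ] be such that Ψ(T) is invertible. Then the map F_T has x as a fixed point on [t0, T]: F_T(t; x) = x(t) for every t ∈ [t0, T]. -/
open MeasureTheory Matrix Set Filter Topology

noncomputable section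

/-
Variation of constants: put `w = Φ⁻¹ x`. By Cramer's rule its components are absolutely continuous,
and differentiating `x = Φ w` almost everywhere and comparing with `Φ' = A Φ`, `x' = A x + g` gives
`w' = Φ⁻¹ g`, so `w(t) = x(t0) + ∫_{t0}^t Φ⁻¹ g`. Hence `Φᵀ Cᵀ y = Φᵀ Cᵀ C Φ w`, and subtracting
`Ξ(T; x)` from its integral over `[t0, T]` leaves `Ψ(T) x(t0)`: applying `Ψ(T)⁻¹` recovers the
initial value `x(t0)` from the output, and `F_T(t; x) = Φ(t) w(t) = x(t)`.
-/

section AbsolutelyContinuous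

variable {a b : ℝ}

theorem absolutelyContinuousOnInterval_of_dist_le {X Y : Type*} [PseudoMetricSpace X]
    [PseudoMetricSpace Y] {f : ℝ → X} {h : ℝ → Y} (K : ℝ)
    (hf : AbsolutelyContinuousOnInterval f a b)
    (hle : ∀ s ∈ uIcc a b, ∀ t ∈ uIcc a b, dist (h s) (h t) ≤ K * dist (f s) (f t)) :
    AbsolutelyContinuousOnInterval h a b := by
  unfold AbsolutelyContinuousOnInterval at hf
  refine squeeze_zero' (.of_forall fun _ ↦ Finset.sum_nonneg fun _ _ ↦ dist_nonneg) ?_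
    (by simpa only [mul_zero] using hf.const_mul K)
  rw [eventually_inf_principal]
  refine .of_forall fun E hE ↦ ?_
  rw [Finset.mul_sum]
  exact Finset.sum_le_sum fun i hi ↦ hle _ (hE.1 i hi).1 _ (hE.1 i hi).2

theorem absolutelyContinuousOnInterval_congr {X : Type*} [PseudoMetricSpace X] {f h : ℝ → X}
    (hf : AbsolutelyContinuousOnInterval f a b) (hfh : EqOn f h (uIcc a b)) :
    AbsolutelyContinuousOnInterval h a b :=
  absolutelyContinuousOnInterval_of_dist_le 1 hf fun s hs t ht ↦ by
    rw [one_mul, hfh hs, hfh ht]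

theorem absolutelyContinuousOnInterval_inv {f : ℝ → ℝ}
    (hf : AbsolutelyContinuousOnInterval f a b) (hne : ∀ t ∈ uIcc a b, f t ≠ 0) :
    AbsolutelyContinuousOnInterval (fun t ↦ (f t)⁻¹) a b := by
  obtain ⟨C, hC⟩ := isCompact_uIcc.exists_bound_of_continuousOn (hf.continuousOn.inv₀ hne)
  refine absolutelyContinuousOnInterval_of_dist_le (C * C) hf fun s hs t ht ↦ ?_
  calc dist (f s)⁻¹ (f t)⁻¹ = ‖(f s)⁻¹‖ * ‖(f t)⁻¹‖ * dist (f s) (f t) := by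
        rw [dist_inv_inv₀ (hne s hs) (hne t ht), norm_inv, norm_inv]
        field_simp
    _ ≤ C * C * dist (f s) (f t) := by
        have := (norm_nonneg _).trans (hC s hs)
        gcongr
        exacts [hC s hs, hC t ht]

/-- The algebra of real functions that are absolutely continuous on `uIcc a b`, so that closure
under finite sums and products is inherited from `Subalgebra`. -/
def absolutelyContinuousSubalgebra (a b : ℝ) : Subalgebra ℝ (ℝ → ℝ) where
  carrier := {f | AbsolutelyContinuousOnInterval f a b}
  mul_mem' := AbsolutelyContinuousOnInterval.mul
  add_mem' := AbsolutelyContinuousOnInterval.add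
  algebraMap_mem' r :=
    (contDiffOn_const (c := r)).absolutelyContinuousOnInterval

variable {ι : Type*} [Fintype ι] [DecidableEq ι]

theorem absolutelyContinuousOnInterval_det {M : ℝ → Matrix ι ι ℝ}
    (hM : ∀ i j, AbsolutelyContinuousOnInterval (fun t ↦ M t i j) a b) :
    AbsolutelyContinuousOnInterval (fun t ↦ (M t).det) a b := by
  have hdet : (fun t ↦ (M t).det) =
      ∑ σ : Equiv.Perm ι, (σ.sign : ℤ) • ∏ i, fun t ↦ M t (σ i) i := by
    ext t
    simp only [det_apply, Finset.sum_apply, Pi.smul_apply, Finset.prod_apply, Units.smul_def]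
  rw [hdet]
  exact (absolutelyContinuousSubalgebra a b).sum_mem fun σ _ ↦
    zsmul_mem (prod_mem fun i _ ↦ hM (σ i) i) _

theorem absolutelyContinuousOnInterval_inv_mulVec {M : ℝ → Matrix ι ι ℝ} {v : ℝ → ι → ℝ}
    (hM : ∀ i j, AbsolutelyContinuousOnInterval (fun t ↦ M t i j) a b)
    (hv : ∀ i, AbsolutelyContinuousOnInterval (fun t ↦ v t i) a b)
    (hunit : ∀ t ∈ uIcc a b, IsUnit (M t)) (j : ι) :
    AbsolutelyContinuousOnInterval (fun t ↦ ((M t)⁻¹ *ᵥ v t) j) a b := by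
  have hdet (t : ℝ) (ht : t ∈ uIcc a b) : IsUnit (M t).det :=
    (isUnit_iff_isUnit_det _).1 (hunit t ht)
  have hcramer : AbsolutelyContinuousOnInterval (fun t ↦ cramer (M t) (v t) j) a b := by
    simp only [cramer_apply]
    refine absolutelyContinuousOnInterval_det fun i k ↦ ?_
    by_cases hk : k = j
    · simpa only [hk, updateCol_self] using hv i
    · simpa only [updateCol_ne hk] using hM i k
  refine absolutelyContinuousOnInterval_congr
    ((absolutelyContinuousOnInterval_inv (absolutelyContinuousOnInterval_det hM)
      fun t ht ↦ (hdet t ht).ne_zero).fun_mul hcramer) fun t ht ↦ ?_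
  rw [← det_smul_inv_mulVec_eq_cramer _ _ (hdet t ht), Pi.smul_apply, smul_eq_mul,
    inv_mul_cancel_left₀ (hdet t ht).ne_zero]

end AbsolutelyContinuous

section Primitive

/-- `f` is an absolutely continuous primitive of `p` on `uIcc a b`: the form in which integral
equations with merely integrable right-hand side are differentiated. -/
structure IsACPrimitive (f p : ℝ → ℝ) (a b : ℝ) : Prop where
  absolutelyContinuous : AbsolutelyContinuousOnInterval f a b
  ae_hasDerivAt : ∀ᵐ s, s ∈ uIcc a b → HasDerivAt f (p s) s

variable {a b c d : ℝ} {f p : ℝ → ℝ}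

theorem IsACPrimitive.mono (hf : IsACPrimitive f p a b) (h : uIcc c d ⊆ uIcc a b) :
    IsACPrimitive f p c d where
  absolutelyContinuous := hf.absolutelyContinuous.mono h
  ae_hasDerivAt := hf.ae_hasDerivAt.mono fun _ hs hsc ↦ hs (h hsc)

theorem IsACPrimitive.integral_eq_sub (hf : IsACPrimitive f p a b) :
    ∫ s in a..b, p s = f b - f a := by
  rw [← hf.absolutelyContinuous.integral_deriv_eq_sub]
  refine intervalIntegral.integral_congr_ae (hf.ae_hasDerivAt.mono fun s hs hsI ↦ ?_)
  exact (hs (uIoc_subset_uIcc hsI)).deriv.symm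

theorem IsACPrimitive.continuousOn_integral (hf : IsACPrimitive f p a b) :
    ContinuousOn (fun t ↦ ∫ s in a..t, p s) (uIcc a b) :=
  (hf.absolutelyContinuous.continuousOn.sub continuousOn_const).congr fun _ ht ↦
    (hf.mono (uIcc_subset_uIcc left_mem_uIcc ht)).integral_eq_sub

theorem ae_uIcc_mem_nhds (a b : ℝ) : ∀ᵐ s, s ∈ uIcc a b → uIcc a b ∈ 𝓝 s := by
  filter_upwards [Measure.ae_ne volume (min a b), Measure.ae_ne volume (max a b)]
    with s hmin hmax hs
  exact Icc_mem_nhds (hs.1.lt_of_ne' hmin) (hs.2.lt_of_ne hmax)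

theorem IsACPrimitive.of_eq_add_integral (hp : IntervalIntegrable p volume a b) {r : ℝ}
    (hf : ∀ t ∈ uIcc a b, f t = r + ∫ s in a..t, p s) : IsACPrimitive f p a b where
  absolutelyContinuous :=
    absolutelyContinuousOnInterval_congr
      ((contDiffOn_const (c := r)).absolutelyContinuousOnInterval.add
        (hp.absolutelyContinuousOnInterval_intervalIntegral left_mem_uIcc))
      fun t ht ↦ (hf t ht).symm
  ae_hasDerivAt := by
    filter_upwards [hp.ae_hasDerivAt_integral, ae_uIcc_mem_nhds a b] with s hderiv hnhds hs
    exact ((hderiv hs a left_mem_uIcc).const_add r).congr_of_eventuallyEq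
      (mem_of_superset (hnhds hs) hf)

end Primitive

section LinearSystem

variable {ι : Type*} [Fintype ι] {a b : ℝ}

theorem mulVec_inv_mulVec {R : Type*} [CommRing R] [DecidableEq ι] {M : Matrix ι ι R}
    (hM : IsUnit M) (v : ι → R) : M *ᵥ (M⁻¹ *ᵥ v) = v := by
  rw [mulVec_mulVec, mul_nonsing_inv _ ((isUnit_iff_isUnit_det _).1 hM), one_mulVec]

theorem inv_mulVec_mulVec {R : Type*} [CommRing R] [DecidableEq ι] {M : Matrix ι ι R}
    (hM : IsUnit M) (v : ι → R) : M⁻¹ *ᵥ (M *ᵥ v) = v := by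
  rw [mulVec_mulVec, nonsing_inv_mul _ ((isUnit_iff_isUnit_det _).1 hM), one_mulVec]

theorem hasDerivAt_mulVec_apply {κ : Type*} {M : ℝ → Matrix κ ι ℝ} {v : ℝ → ι → ℝ}
    {M' : Matrix κ ι ℝ} {v' : ι → ℝ} {s : ℝ} {i : κ}
    (hM : ∀ j, HasDerivAt (fun t ↦ M t i j) (M' i j) s)
    (hv : ∀ j, HasDerivAt (fun t ↦ v t j) (v' j) s) :
    HasDerivAt (fun t ↦ (M t *ᵥ v t) i) ((M' *ᵥ v s + M s *ᵥ v') i) s := by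
  simpa only [Pi.add_apply, mulVec, dotProduct, ← Finset.sum_add_distrib] using
    HasDerivAt.fun_sum fun j (_ : j ∈ Finset.univ) ↦ (hM j).fun_mul (hv j)

theorem IsACPrimitive.inv_mulVec [DecidableEq ι] {A Φ : ℝ → Matrix ι ι ℝ} {x f : ℝ → ι → ℝ}
    (hΦ : ∀ i j, IsACPrimitive (fun t ↦ Φ t i j) (fun s ↦ (A s * Φ s) i j) a b)
    (hx : ∀ i, IsACPrimitive (fun t ↦ x t i) (fun s ↦ (A s *ᵥ x s + f s) i) a b)
    (hunit : ∀ t ∈ uIcc a b, IsUnit (Φ t)) (j : ι) :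
    IsACPrimitive (fun t ↦ ((Φ t)⁻¹ *ᵥ x t) j) (fun s ↦ ((Φ s)⁻¹ *ᵥ f s) j) a b := by
  set w : ℝ → ι → ℝ := fun t ↦ (Φ t)⁻¹ *ᵥ x t
  have hw (i : ι) : AbsolutelyContinuousOnInterval (fun t ↦ w t i) a b :=
    absolutelyContinuousOnInterval_inv_mulVec (fun i j ↦ (hΦ i j).absolutelyContinuous)
      (fun i ↦ (hx i).absolutelyContinuous) hunit i
  have hΦw (t : ℝ) (ht : t ∈ uIcc a b) : Φ t *ᵥ w t = x t := mulVec_inv_mulVec (hunit t ht) _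
  refine ⟨hw j, ?_⟩
  filter_upwards [ae_all_iff.2 fun i ↦ ae_all_iff.2 fun j ↦ (hΦ i j).ae_hasDerivAt,
    ae_all_iff.2 fun i ↦ (hx i).ae_hasDerivAt, ae_all_iff.2 fun i ↦ (hw i).ae_differentiableAt,
    ae_uIcc_mem_nhds a b] with s hΦ' hx' hw' hnhds hs
  set w' : ι → ℝ := fun i ↦ deriv (fun t ↦ w t i) s
  have hprod (i : ι) : (A s *ᵥ x s + f s) i = ((A s * Φ s) *ᵥ w s + Φ s *ᵥ w') i := by
    refine (hx' i hs).unique ((hasDerivAt_mulVec_apply (fun j ↦ hΦ' i j hs)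
      fun j ↦ (hw' j hs).hasDerivAt).congr_of_eventuallyEq ?_)
    filter_upwards [hnhds hs] with t ht
    rw [hΦw t ht]
  have hΦw' : Φ s *ᵥ w' = f s := by
    have := funext hprod
    rwa [← mulVec_mulVec, hΦw s hs, add_right_inj, eq_comm] at this
  have hw'_eq : (Φ s)⁻¹ *ᵥ f s = w' := by
    rw [← hΦw', inv_mulVec_mulVec (hunit s hs)]
  rw [hw'_eq]
  exact (hw' j hs).hasDerivAt

end LinearSystem

section Integrability

variable {ι κ : Type*} [Fintype ι] {a b : ℝ}

theorem intervalIntegrable_dotProduct {μ : Measure ℝ} {u v : ℝ → ι → ℝ}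
    (hu : ∀ i, IntervalIntegrable (fun t ↦ u t i) μ a b)
    (hv : ∀ i, ContinuousOn (fun t ↦ v t i) (uIcc a b)) :
    IntervalIntegrable (fun t ↦ u t ⬝ᵥ v t) μ a b := by
  have hsum := IntervalIntegrable.sum Finset.univ fun i _ ↦ (hu i).mul_continuousOn (hv i)
  exact hsum.congr fun t _ ↦ Finset.sum_apply t _ _

theorem intervalIntegrable_transpose_mul_mul_apply {μ : Measure ℝ}
    {M : ℝ → Matrix ι κ ℝ} {G : ℝ → Matrix ι ι ℝ}
    (hM : ∀ i j, ContinuousOn (fun t ↦ M t i j) (uIcc a b))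
    (hG : ∀ i j, IntervalIntegrable (fun t ↦ G t i j) μ a b) (i j : κ) :
    IntervalIntegrable (fun t ↦ ((M t)ᵀ * G t * M t) i j) μ a b :=
  intervalIntegrable_dotProduct
    (fun k ↦ by
      simpa only [dotProduct_comm, mul_apply'] using!
        intervalIntegrable_dotProduct (fun l ↦ hG l k) fun l ↦ hM l i)
    fun k ↦ hM k j

theorem integral_mulVec_const_add_sub {μ : Measure ℝ} {K : ℝ → Matrix κ ι ℝ} {v : ℝ → ι → ℝ}
    (hK : ∀ i j, IntervalIntegrable (fun t ↦ K t i j) μ a b)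
    (hv : ∀ i, ContinuousOn (fun t ↦ v t i) (uIcc a b)) (c : ι → ℝ) (i : κ) :
    (∫ t in a..b, (K t *ᵥ (c + v t)) i ∂μ) - ∫ t in a..b, (K t *ᵥ v t) i ∂μ =
      ((of fun i j ↦ ∫ t in a..b, K t i j ∂μ) *ᵥ c) i := by
  have hKc (j : ι) : IntervalIntegrable (fun t ↦ K t i j * c j) μ a b := (hK i j).mul_const _
  have hKv : IntervalIntegrable (fun t ↦ (K t *ᵥ v t) i) μ a b :=
    intervalIntegrable_dotProduct (hK i) hv
  have hKcv : IntervalIntegrable (fun t ↦ (K t *ᵥ (c + v t)) i) μ a b :=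
    intervalIntegrable_dotProduct (hK i) fun j ↦ (hv j).const_add (c j)
  rw [← intervalIntegral.integral_sub hKcv hKv]
  simp only [mulVec_add, Pi.add_apply, add_sub_cancel_right]
  simp only [mulVec, dotProduct, of_apply]
  rw [intervalIntegral.integral_finsetSum fun j _ ↦ hKc j]
  simp only [intervalIntegral.integral_mul_const]

theorem aemeasurable_caratheodory_comp {α X Y : Type*} [MeasurableSpace α] {μ : Measure α}
    [TopologicalSpace X] [SecondCountableTopology X] [TopologicalSpace.MetrizableSpace X]
    [MeasurableSpace X] [OpensMeasurableSpace X] [TopologicalSpace Y]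
    [TopologicalSpace.PseudoMetrizableSpace Y] [MeasurableSpace Y] [BorelSpace Y]
    {s : Set α} (hs : MeasurableSet s) {h : α → X → Y} (hmeas : ∀ v, Measurable fun t ↦ h t v)
    (hcont : ∀ t ∈ s, Continuous (h t)) {x : α → X} (hx : AEMeasurable x (μ.restrict s)) :
    AEMeasurable (fun t ↦ h t (x t)) (μ.restrict s) := by
  have hmeas' : Measurable (Function.uncurry fun v (t : s) ↦ h t v) :=
    measurable_uncurry_of_continuous_of_measurable (fun t ↦ hcont t t.2)
      fun v ↦ (hmeas v).comp measurable_subtype_coe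
  rw [← map_comap_subtype_coe hs, (MeasurableEmbedding.subtype_coe hs).aemeasurable_map_iff]
    at hx ⊢
  exact hmeas'.comp_aemeasurable (hx.prodMk aemeasurable_id)

theorem intervalIntegrable_of_norm_le {E : Type*} [NormedAddCommGroup E] {μ : Measure ℝ}
    [IsLocallyFiniteMeasure μ] {f : ℝ → E} {M : ℝ}
    (hf : AEStronglyMeasurable f (μ.restrict (uIcc a b))) (hM : ∀ t ∈ uIcc a b, ‖f t‖ ≤ M) :
    IntervalIntegrable f μ a b :=
  (IntegrableOn.of_bound isCompact_uIcc.measure_lt_top hf M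
    ((ae_restrict_iff' measurableSet_uIcc).2 (.of_forall hM))).intervalIntegrable

end Integrability

section Caratheodory

variable {n k0 : ℕ} {t0 τ : ℝ} {A : ℝ → Matrix (Fin n) (Fin n) ℝ}
  {C : ℝ → Matrix (Fin k0) (Fin n) ℝ} {g : ℝ → (Fin n → ℝ) → Fin n → ℝ}
  {Φ : ℝ → Matrix (Fin n) (Fin n) ℝ} {x : ℝ → Fin n → ℝ} {y : ℝ → Fin k0 → ℝ}

theorem RegularData.intervalIntegrable_linear (h : RegularData n k0 t0 τ A C g) (ht : t0 ≤ τ)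
    (i j : Fin n) : IntervalIntegrable (fun t ↦ A t i j) volume t0 τ := by
  rw [RegularData, ← uIcc_of_le ht] at h
  obtain ⟨hmeas, ⟨M, hM⟩, -⟩ := h
  exact intervalIntegrable_of_norm_le (hmeas i j).aestronglyMeasurable fun t ht ↦ hM t ht i j

theorem RegularData.intervalIntegrable_transpose_mul_self (h : RegularData n k0 t0 τ A C g)
    (ht : t0 ≤ τ) (i j : Fin n) :
    IntervalIntegrable (fun t ↦ ((C t)ᵀ * C t) i j) volume t0 τ := by
  rw [RegularData, ← uIcc_of_le ht] at h
  obtain ⟨-, -, hmeas, ⟨M, hM⟩, -⟩ := h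
  simp only [mul_apply, transpose_apply]
  refine intervalIntegrable_of_norm_le (M := ∑ _ : Fin k0, M * M)
    (Finset.measurable_fun_sum _ fun k _ ↦ (hmeas k i).mul (hmeas k j)).aestronglyMeasurable
    fun t ht ↦ norm_sum_le_of_le _ fun k _ ↦ ?_
  exact norm_mul_le_of_le (hM t ht k i) (hM t ht k j)

theorem RegularData.intervalIntegrable_nonlinear (h : RegularData n k0 t0 τ A C g) (ht : t0 ≤ τ)
    (hx : ContinuousOn x (Icc t0 τ)) (i : Fin n) :
    IntervalIntegrable (fun t ↦ g t (x t) i) volume t0 τ := by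
  rw [← uIcc_of_le ht] at hx
  rw [RegularData, ← uIcc_of_le ht] at h
  obtain ⟨-, -, -, -, hmeas, hcont, hbdd⟩ := h
  obtain ⟨R, hR⟩ := isCompact_uIcc.exists_bound_of_continuousOn hx
  obtain ⟨M, hM⟩ := hbdd (max R 1) (by positivity)
  have hgx : AEMeasurable (fun t ↦ g t (x t) i) (volume.restrict (uIcc t0 τ)) :=
    aemeasurable_caratheodory_comp measurableSet_uIcc (fun v ↦ hmeas v i)
      (fun t ht ↦ (continuous_apply i).comp (hcont t ht)) (hx.aemeasurable measurableSet_uIcc)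
  exact intervalIntegrable_of_norm_le hgx.aestronglyMeasurable fun t ht ↦
    (norm_le_pi_norm (g t (x t)) i).trans (hM t ht _ ((hR t ht).trans (le_max_left R 1)))

theorem IsFundamental.apply_left_s6 (hΦ : IsFundamental n t0 τ A Φ) (ht : t0 ≤ τ) : Φ t0 = 1 := by
  ext i j
  simpa only [intervalIntegral.integral_same, add_zero] using hΦ.2 t0 (left_mem_Icc.2 ht) i j

theorem IsFundamental.isACPrimitive (hΦ : IsFundamental n t0 τ A Φ) (ht : t0 ≤ τ)
    (hA : ∀ i j, IntervalIntegrable (fun t ↦ A t i j) volume t0 τ) (i j : Fin n) :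
    IsACPrimitive (fun t ↦ Φ t i j) (fun s ↦ (A s * Φ s) i j) t0 τ := by
  rw [IsFundamental, ← uIcc_of_le ht] at hΦ
  exact IsACPrimitive.of_eq_add_integral
    (intervalIntegrable_dotProduct (hA i) fun k ↦ hΦ.1 k j) fun t ht ↦ hΦ.2 t ht i j

theorem IsSolution.isACPrimitive (hx : IsSolution n t0 τ A g x) (ht : t0 ≤ τ)
    (hA : ∀ i j, IntervalIntegrable (fun t ↦ A t i j) volume t0 τ)
    (hg : ∀ i, IntervalIntegrable (fun t ↦ g t (x t) i) volume t0 τ) (i : Fin n) :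
    IsACPrimitive (fun t ↦ x t i) (fun s ↦ (A s *ᵥ x s + g s (x s)) i) t0 τ := by
  rw [IsSolution, ← uIcc_of_le ht] at hx
  exact IsACPrimitive.of_eq_add_integral
    ((intervalIntegrable_dotProduct (hA i) (continuousOn_pi.1 hx.1)).add (hg i))
    fun t ht ↦ hx.2 t ht i

theorem IsSolution.isACPrimitive_inv_mulVec (hx : IsSolution n t0 τ A g x) (ht : t0 ≤ τ)
    (hA : ∀ i j, IntervalIntegrable (fun t ↦ A t i j) volume t0 τ)
    (hg : ∀ i, IntervalIntegrable (fun t ↦ g t (x t) i) volume t0 τ)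
    (hΦ : IsFundamental n t0 τ A Φ) (hΦinv : ∀ t ∈ Icc t0 τ, IsUnit (Φ t)) (i : Fin n) :
    IsACPrimitive (fun t ↦ ((Φ t)⁻¹ *ᵥ x t) i) (fun s ↦ ((Φ s)⁻¹ *ᵥ g s (x s)) i) t0 τ :=
  IsACPrimitive.inv_mulVec (hΦ.isACPrimitive ht hA) (hx.isACPrimitive ht hA hg)
    (by rwa [uIcc_of_le ht]) i

theorem IsSolution.eq_mulVec_add_integral (hx : IsSolution n t0 τ A g x)
    (hA : ∀ i j, IntervalIntegrable (fun t ↦ A t i j) volume t0 τ)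
    (hg : ∀ i, IntervalIntegrable (fun t ↦ g t (x t) i) volume t0 τ)
    (hΦ : IsFundamental n t0 τ A Φ) (hΦinv : ∀ t ∈ Icc t0 τ, IsUnit (Φ t)) {t : ℝ}
    (ht : t ∈ Icc t0 τ) :
    x t = Φ t *ᵥ (x t0 + fun i ↦ ∫ s in t0..t, ((Φ s)⁻¹ *ᵥ g s (x s)) i) := by
  have hτ : t0 ≤ τ := ht.1.trans ht.2
  have hw : (Φ t)⁻¹ *ᵥ x t = x t0 + fun i ↦ ∫ s in t0..t, ((Φ s)⁻¹ *ᵥ g s (x s)) i := by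
    ext i
    have hprim := (hx.isACPrimitive_inv_mulVec hτ hA hg hΦ hΦinv i).mono
      (uIcc_subset_uIcc left_mem_uIcc (Icc_subset_uIcc ht))
    rw [Pi.add_apply, hprim.integral_eq_sub, hΦ.apply_left_s6 hτ, inv_one, one_mulVec,
      add_sub_cancel]
  rw [← hw, mulVec_inv_mulVec (hΦinv t ht)]

theorem Psi_mulVec_eq_sub_Xi {T : ℝ} {z : ℝ → Fin n → ℝ} {c : Fin n → ℝ}
    (hΦ : ∀ i j, ContinuousOn (fun t ↦ Φ t i j) (uIcc t0 T))
    (hC : ∀ i j, IntervalIntegrable (fun t ↦ ((C t)ᵀ * C t) i j) volume t0 T)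
    (hv : ∀ i, ContinuousOn (fun t ↦ ∫ s in t0..t, ((Φ s)⁻¹ *ᵥ g s (z s)) i) (uIcc t0 T))
    (hy : ∀ t ∈ uIcc t0 T,
      y t = C t *ᵥ (Φ t *ᵥ (c + fun i ↦ ∫ s in t0..t, ((Φ s)⁻¹ *ᵥ g s (z s)) i))) :
    Psi n k0 t0 C Φ T *ᵥ c =
      (fun i ↦ ∫ ρ in t0..T, (((Φ ρ)ᵀ * (C ρ)ᵀ) *ᵥ y ρ) i) - Xi n k0 t0 C Φ g z T := by
  have hK (i j : Fin n) :
      IntervalIntegrable (fun t ↦ ((Φ t)ᵀ * (C t)ᵀ * C t * Φ t) i j) volume t0 T := by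
    simpa only [Matrix.mul_assoc] using intervalIntegrable_transpose_mul_mul_apply hΦ hC i j
  ext i
  refine (integral_mulVec_const_add_sub hK hv c i).symm.trans (congrArg (· - _) ?_)
  refine intervalIntegral.integral_congr fun t ht ↦ ?_
  simp only [hy t ht, mulVec_mulVec, Matrix.mul_assoc]

end Caratheodory

theorem stmt6_general (n k0 : ℕ) (t0 τ : ℝ) (A : ℝ → Matrix (Fin n) (Fin n) ℝ)
    (C : ℝ → Matrix (Fin k0) (Fin n) ℝ) (g : ℝ → (Fin n → ℝ) → (Fin n → ℝ))
    (hA : ∀ i j, IntervalIntegrable (fun t ↦ A t i j) volume t0 τ)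
    (hC : ∀ i j, IntervalIntegrable (fun t ↦ ((C t)ᵀ * C t) i j) volume t0 τ)
    (Φ : ℝ → Matrix (Fin n) (Fin n) ℝ) (hΦ : IsFundamental n t0 τ A Φ)
    (hΦinv : ∀ t ∈ Icc t0 τ, IsUnit (Φ t))
    (x : ℝ → Fin n → ℝ) (hx : IsSolution n t0 τ A g x)
    (hg : ∀ i, IntervalIntegrable (fun t ↦ g t (x t) i) volume t0 τ)
    (y : ℝ → Fin k0 → ℝ) (hy : ∀ t ∈ Icc t0 τ, y t = C t *ᵥ x t)
    (T : ℝ) (hT : T ∈ Icc t0 τ) (hΨT : IsUnit (Psi n k0 t0 C Φ T)) :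
    ∀ t ∈ Icc t0 T, Fmap n k0 t0 C Φ g y T x t = x t := by
  have hτ : t0 ≤ τ := hT.1.trans hT.2
  have hsub : uIcc t0 T ⊆ Icc t0 τ := uIcc_subset_Icc (left_mem_Icc.2 hτ) hT
  have hx_eq {t : ℝ} (ht : t ∈ Icc t0 τ) :
      x t = Φ t *ᵥ (x t0 + fun i ↦ ∫ s in t0..t, ((Φ s)⁻¹ *ᵥ g s (x s)) i) :=
    hx.eq_mulVec_add_integral hA hg hΦ hΦinv ht
  have hΨ : Psi n k0 t0 C Φ T *ᵥ x t0 =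
      (fun i ↦ ∫ ρ in t0..T, (((Φ ρ)ᵀ * (C ρ)ᵀ) *ᵥ y ρ) i) - Xi n k0 t0 C Φ g x T :=
    Psi_mulVec_eq_sub_Xi (fun i j ↦ (hΦ.1 i j).mono hsub)
      (fun i j ↦ (hC i j).mono_set (hsub.trans Icc_subset_uIcc))
      (fun i ↦ ((hx.isACPrimitive_inv_mulVec hτ hA hg hΦ hΦinv i).mono
        (hsub.trans Icc_subset_uIcc)).continuousOn_integral)
      fun t ht ↦ (hy t (hsub ht)).trans (congrArg _ (hx_eq (hsub ht)))
  intro t ht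
  rw [Fmap, ← hΨ, inv_mulVec_mulVec hΨT, ← mulVec_add]
  exact (hx_eq ⟨ht.1, ht.2.trans hT.2⟩).symm

theorem stmt6 (n k0 : ℕ) (hn : 1 ≤ n) (hk0 : 1 ≤ k0) (t0 τ : ℝ) (ht : t0 < τ)
    (A : ℝ → Matrix (Fin n) (Fin n) ℝ) (C : ℝ → Matrix (Fin k0) (Fin n) ℝ)
    (g : ℝ → (Fin n → ℝ) → (Fin n → ℝ))
    (hreg : RegularData n k0 t0 τ A C g)
    (Φ : ℝ → Matrix (Fin n) (Fin n) ℝ) (hΦ : IsFundamental n t0 τ A Φ)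
    (hΦinv : ∀ t ∈ Set.Icc t0 τ, IsUnit (Φ t))
    (x : ℝ → (Fin n → ℝ)) (hx : IsSolution n t0 τ A g x)
    (y : ℝ → (Fin k0 → ℝ)) (hy : ∀ t ∈ Set.Icc t0 τ, y t = (C t).mulVec (x t))
    (T : ℝ) (hT : T ∈ Set.Ioc t0 τ) (hΨT : IsUnit (Psi n k0 t0 C Φ T)) :
    ∀ t ∈ Set.Icc t0 T, Fmap n k0 t0 C Φ g y T x t = x t := by
  exact stmt6_general n k0 t0 τ A C g (hreg.intervalIntegrable_linear ht.le)
    (hreg.intervalIntegrable_transpose_mul_self ht.le) Φ hΦ hΦinv x hx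
    (hreg.intervalIntegrable_nonlinear ht.le hx.1) y hy T (Ioc_subset_Icc_self hT) hΨT
end
end

section
/- Assume in addition that each a_l has a one-sided limit at t0: lim_{s→t0⁺} a_l(s) = α_l for l = 2, …, n. Then for all indices 1 ≤ i ≤ j ≤ n: lim_{t→t0⁺} Φ(t)_{ij} / (t − t0)^{j−i} = (∏_{l=i+1}^{j} α_l) / (j − i)! (for i = j the statement reads Φ(t)_{ii} = 1). -/
open MeasureTheory Matrix Set Filter Topology

noncomputable section

/-- The triangular system matrix: `A(t)_{i,i+1} = a_{i+1}(t)` (1-based), zero elsewhere. -/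
def triA (n : ℕ) (a : ℕ → ℝ → ℝ) (t : ℝ) : Matrix (Fin n) (Fin n) ℝ :=
  Matrix.of fun i j => if (j : ℕ) = (i : ℕ) + 1 then a ((i : ℕ) + 2) t else 0

/-- `iterInt t0 a l m t = ∫_{t0}^t a_l(s₁) ∫_{t0}^{s₁} a_{l+1}(s₂) ⋯ ` (depth `m`). -/
def iterInt (t0 : ℝ) (a : ℕ → ℝ → ℝ) : ℕ → ℕ → ℝ → ℝ
  | _, 0, _ => 1
  | l, m + 1, t => ∫ s in t0..t, a l s * iterInt t0 a (l + 1) m s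

/-- Regularity: each `a_l`, `l = 2, …, n`, measurable and bounded on `[t0, τ]`. -/
def ARegular (n : ℕ) (t0 τ : ℝ) (a : ℕ → ℝ → ℝ) : Prop :=
  (∀ l, 2 ≤ l → l ≤ n → Measurable (a l)) ∧
  (∀ l, 2 ≤ l → l ≤ n → ∃ M : ℝ, ∀ t ∈ Set.Icc t0 τ, |a l t| ≤ M)

/-!
In 1-based indices, row `i` of the integral equation is
`Φ_{ij}(t) = δ_{ij} + ∫_{t0}^t a_{i+1} Φ_{i+1,j}`, and the last row of `Φ` is constant; going up
from there, `Φ` is upper unitriangular. If `Φ_{i+1,j}(s) / (s - t0) ^ m → c`, then the integrand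
is `(α_{i+1} c + o(1)) (s - t0) ^ m`, and such an expansion may be integrated even where the
integrand is discontinuous. So each step up a column raises the exponent from `m` to `m + 1` and
multiplies the coefficient by `α_{i+1} / (m + 1)`.
-/

theorem eventually_nhdsGT_forall_mem_Ioc {X : Type*} [TopologicalSpace X] [LinearOrder X]
    [OrderTopology X] [DenselyOrdered X] [NoMaxOrder X] {x : X} {p : X → Prop}
    (hp : ∀ᶠ y in 𝓝[>] x, p y) : ∀ᶠ z in 𝓝[>] x, ∀ y ∈ Ioc x z, p y := by
  obtain ⟨u, hu, hsub⟩ := mem_nhdsGT_iff_exists_Ioc_subset.1 hp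
  filter_upwards [Ioc_mem_nhdsGT hu] with z hz y hy
  exact hsub ⟨hy.1, hy.2.trans hz.2⟩

section IntegralAsymptotics

variable {E F : Type*} [NormedAddCommGroup E] [NormedAddCommGroup F] {μ : Measure ℝ} {t0 : ℝ}

theorem eventually_nhdsGT_intervalIntegrable {f : ℝ → E}
    (hf : IntegrableAtFilter f (𝓝[>] t0) μ) :
    ∀ᶠ t in 𝓝[>] t0, IntervalIntegrable f μ t0 t := by
  obtain ⟨s, hs, hfs⟩ := hf
  filter_upwards [eventually_nhdsGT_forall_mem_Ioc hs, self_mem_nhdsWithin] with t hts ht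
  exact (intervalIntegrable_iff_integrableOn_Ioc_of_le (mem_Ioi.1 ht).le).2 (hfs.mono_set hts)

theorem isLittleO_intervalIntegral_nhdsGT [NormedSpace ℝ E] {f : ℝ → E} {g : ℝ → F}
    (hfg : f =o[𝓝[>] t0] g) (hg : IntegrableAtFilter g (𝓝[>] t0) μ) :
    (fun t => ∫ s in t0..t, f s ∂μ) =o[𝓝[>] t0] fun t => ∫ s in t0..t, ‖g s‖ ∂μ := by
  refine Asymptotics.isLittleO_iff.2 fun c hc => ?_
  filter_upwards [eventually_nhdsGT_forall_mem_Ioc (hfg.def hc),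
    eventually_nhdsGT_intervalIntegrable hg, self_mem_nhdsWithin] with t hbound hint ht
  calc ‖∫ s in t0..t, f s ∂μ‖
      ≤ ∫ s in t0..t, c * ‖g s‖ ∂μ :=
        intervalIntegral.norm_integral_le_of_norm_le (mem_Ioi.1 ht).le
          (ae_of_all _ hbound) (hint.norm.const_mul c)
    _ = c * ∫ s in t0..t, ‖g s‖ ∂μ := intervalIntegral.integral_const_mul _ _
    _ ≤ c * ‖∫ s in t0..t, ‖g s‖ ∂μ‖ := by gcongr; exact Real.le_norm_self _

/- An integral form of l'Hôpital's rule: `f` need not be continuous, so its primitive need not be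
differentiable and the usual rule does not apply. -/
theorem tendsto_intervalIntegral_div_intervalIntegral {f g : ℝ → ℝ} {c : ℝ}
    (hf : StronglyMeasurableAtFilter f (𝓝[>] t0))
    (hg : IntegrableAtFilter g (𝓝[>] t0)) (hg_pos : ∀ᶠ s in 𝓝[>] t0, 0 < g s)
    (hfg : Tendsto (fun s => f s / g s) (𝓝[>] t0) (𝓝 c)) :
    Tendsto (fun t => (∫ s in t0..t, f s) / ∫ s in t0..t, g s) (𝓝[>] t0) (𝓝 c) := by
  have hg_ne : ∀ᶠ s in 𝓝[>] t0, g s ≠ 0 := hg_pos.mono fun _ hs => hs.ne'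
  have hf_int : IntegrableAtFilter f (𝓝[>] t0) :=
    (Asymptotics.isBigO_of_div_tendsto_nhds (hg_ne.mono fun _ hs h => absurd h hs) c hfg
      ).integrableAtFilter hf hg
  have hsub : (fun s => f s - c * g s) =o[𝓝[>] t0] g := by
    refine (Asymptotics.isLittleO_iff_tendsto' (hg_ne.mono fun _ hs h => absurd h hs)).2 ?_
    refine (tendsto_sub_nhds_zero_iff.2 hfg).congr' ?_
    filter_upwards [hg_ne] with s hs
    field_simp
  refine tendsto_sub_nhds_zero_iff.1
    ((isLittleO_intervalIntegral_nhdsGT hsub hg).tendsto_div_nhds_zero.congr' ?_)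
  filter_upwards [eventually_nhdsGT_forall_mem_Ioc hg_pos, eventually_nhdsGT_intervalIntegrable hg,
    eventually_nhdsGT_intervalIntegrable hf_int, self_mem_nhdsWithin] with t hpos hgt hft ht
  have hnorm : ∫ s in t0..t, ‖g s‖ = ∫ s in t0..t, g s :=
    intervalIntegral.integral_congr_Ioo_of_le (mem_Ioi.1 ht).le
      fun s hs => Real.norm_of_nonneg (hpos s (Ioo_subset_Ioc_self hs)).le
  have hint_pos : 0 < ∫ s in t0..t, g s :=
    intervalIntegral.intervalIntegral_pos_of_pos_on hgt
      (fun s hs => hpos s (Ioo_subset_Ioc_self hs)) ht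
  rw [hnorm, intervalIntegral.integral_sub hft (hgt.const_mul c),
    intervalIntegral.integral_const_mul]
  field_simp

theorem integral_sub_left_endpoint_pow (a b : ℝ) (m : ℕ) :
    ∫ s in a..b, (s - a) ^ m = (b - a) ^ (m + 1) / (m + 1) := by
  simp [intervalIntegral.integral_comp_sub_right (fun x => x ^ m) a, integral_pow]

theorem tendsto_intervalIntegral_div_pow_succ {f : ℝ → ℝ} {c : ℝ} {m : ℕ}
    (hf : StronglyMeasurableAtFilter f (𝓝[>] t0))
    (hlim : Tendsto (fun s => f s / (s - t0) ^ m) (𝓝[>] t0) (𝓝 c)) :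
    Tendsto (fun t => (∫ s in t0..t, f s) / (t - t0) ^ (m + 1)) (𝓝[>] t0) (𝓝 (c / (m + 1))) := by
  have hpow_int : IntegrableAtFilter (fun s => (s - t0) ^ m) (𝓝[>] t0) :=
    ((by fun_prop : Continuous fun s : ℝ => (s - t0) ^ m).integrableAt_nhds t0).filter_mono
      nhdsWithin_le_nhds
  have hpow_pos : ∀ᶠ s in 𝓝[>] t0, 0 < (s - t0) ^ m := by
    filter_upwards [self_mem_nhdsWithin] with s hs using pow_pos (sub_pos.2 hs) m
  refine ((tendsto_intervalIntegral_div_intervalIntegral hf hpow_int hpow_pos hlim).div_const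
    _).congr fun t => ?_
  rw [integral_sub_left_endpoint_pow]
  field_simp

end IntegralAsymptotics

section FundamentalMatrix

variable {n : ℕ} {t0 τ : ℝ} {Φ : ℝ → Matrix (Fin n) (Fin n) ℝ}

theorem IsFundamental.apply_eq_one_of_le {A : ℝ → Matrix (Fin n) (Fin n) ℝ}
    (hΦ : IsFundamental n t0 τ A Φ) (hA : ∀ t ∈ Icc t0 τ, ∀ i j, j ≤ i → A t i j = 0)
    {i j : Fin n} (hji : j ≤ i) {t : ℝ} (ht : t ∈ Icc t0 τ) :
    Φ t i j = (1 : Matrix (Fin n) (Fin n) ℝ) i j := by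
  induction i using WellFoundedGT.induction generalizing t with
  | ind i ih =>
    have hzero : ∀ s ∈ uIcc t0 t, (A s * Φ s) i j = 0 := by
      intro s hs
      rw [uIcc_of_le ht.1] at hs
      have hsτ : s ∈ Icc t0 τ := ⟨hs.1, hs.2.trans ht.2⟩
      rw [Matrix.mul_apply]
      refine Finset.sum_eq_zero fun k _ => ?_
      rcases le_or_gt k i with hki | hik
      · rw [hA s hsτ i k hki, zero_mul]
      · have hjk : j < k := hji.trans_lt hik
        rw [ih k hik hjk.le hsτ, Matrix.one_apply_ne hjk.ne', mul_zero]
    rw [hΦ.2 t ht i j, intervalIntegral.integral_congr hzero, intervalIntegral.integral_zero,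
      add_zero]

variable {a : ℕ → ℝ → ℝ}

theorem triA_apply_eq_zero_of_le {i j : Fin n} (hji : j ≤ i) (t : ℝ) : triA n a t i j = 0 :=
  if_neg (by have : (j : ℕ) ≤ i := hji; omega)

theorem triA_mul_apply {ι : Type*} {i k : Fin n} (hik : (k : ℕ) = i + 1) (t : ℝ)
    (P : Matrix (Fin n) ι ℝ) (j : ι) :
    (triA n a t * P) i j = a (i + 2) t * P k j := by
  rw [Matrix.mul_apply, Finset.sum_eq_single k]
  · simp [triA, hik]
  · intro l _ hlk
    have hl : (l : ℕ) ≠ i + 1 := fun h => hlk (Fin.ext (h.trans hik.symm))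
    simp [triA, hl]
  · simp

theorem IsFundamental.apply_eq_integral (hΦ : IsFundamental n t0 τ (triA n a) Φ)
    {i k j : Fin n} (hik : (k : ℕ) = i + 1) (hkj : k ≤ j) {t : ℝ} (ht : t ∈ Icc t0 τ) :
    Φ t i j = ∫ s in t0..t, a (i + 2) s * Φ s k j := by
  have hij : i ≠ j := (lt_of_lt_of_le (Fin.lt_def.2 (by omega)) hkj : i < j).ne
  simp only [hΦ.2 t ht i j, Matrix.one_apply_ne hij, zero_add, triA_mul_apply hik]

theorem IsFundamental.tendsto_apply_div_pow_succ (hΦ : IsFundamental n t0 τ (triA n a) Φ)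
    (hτ : t0 < τ) {i k j : Fin n} (hik : (k : ℕ) = i + 1) (hkj : k ≤ j) {m : ℕ} {b c : ℝ}
    (ha : StronglyMeasurableAtFilter (a (i + 2)) (𝓝[>] t0))
    (ha_lim : Tendsto (a (i + 2)) (𝓝[>] t0) (𝓝 b))
    (hΦ_lim : Tendsto (fun t => Φ t k j / (t - t0) ^ m) (𝓝[>] t0) (𝓝 c)) :
    Tendsto (fun t => Φ t i j / (t - t0) ^ (m + 1)) (𝓝[>] t0) (𝓝 (b * c / (m + 1))) := by
  have hΦ_meas : StronglyMeasurableAtFilter (fun t => Φ t k j) (𝓝[>] t0) :=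
    ⟨Icc t0 τ, Icc_mem_nhdsGT hτ, (hΦ.1 k j).aestronglyMeasurable measurableSet_Icc⟩
  have hmeas : StronglyMeasurableAtFilter (fun t => a (i + 2) t * Φ t k j) (𝓝[>] t0) := by
    obtain ⟨s, hs, has⟩ := ha.eventually.and hΦ_meas.eventually |>.exists_mem_of_smallSets
    exact ⟨s, hs, has.1.mul has.2⟩
  have hlim : Tendsto (fun t => a (i + 2) t * Φ t k j / (t - t0) ^ m) (𝓝[>] t0) (𝓝 (b * c)) := by
    simpa only [mul_div_assoc] using ha_lim.mul hΦ_lim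
  refine (tendsto_intervalIntegral_div_pow_succ hmeas hlim).congr' ?_
  filter_upwards [Icc_mem_nhdsGT hτ] with t ht
  rw [hΦ.apply_eq_integral hik hkj ht]

end FundamentalMatrix

theorem prod_Icc_div_factorial_succ {K : Type*} [Semifield K] (α : ℕ → K) (l m : ℕ) :
    (∏ k ∈ Finset.Icc l (l + m), α k) / ((m + 1).factorial : K) =
      α l * ((∏ k ∈ Finset.Icc (l + 1) (l + m), α k) / (m.factorial : K)) / (m + 1) := by
  rw [← Finset.mul_prod_Ioc_eq_prod_Icc (Nat.le_add_right l m), Finset.Icc_add_one_left_eq_Ioc,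
    Nat.factorial_succ, mul_div_assoc', div_div, Nat.cast_mul, Nat.cast_succ, mul_comm (m + 1 : K)]

theorem stmt10_general {n : ℕ} {t0 τ : ℝ} (ht : t0 < τ) {a : ℕ → ℝ → ℝ}
    (ha : ∀ l, 2 ≤ l → l ≤ n → StronglyMeasurableAtFilter (a l) (𝓝[>] t0))
    {Φ : ℝ → Matrix (Fin n) (Fin n) ℝ} (hΦ : IsFundamental n t0 τ (triA n a) Φ) {α : ℕ → ℝ}
    (hα : ∀ l, 2 ≤ l → l ≤ n → Tendsto (a l) (𝓝[>] t0) (𝓝 (α l))) {i j : Fin n} (hij : i ≤ j) :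
    Tendsto (fun t => Φ t i j / (t - t0) ^ ((j : ℕ) - i)) (𝓝[>] t0)
      (𝓝 ((∏ l ∈ Finset.Icc ((i : ℕ) + 2) (j + 1), α l) / ((j : ℕ) - i).factorial)) := by
  obtain ⟨m, hm⟩ : ∃ m : ℕ, (j : ℕ) = i + m := Nat.exists_eq_add_of_le hij
  rw [show (j : ℕ) - i = m by omega]
  induction m generalizing i with
  | zero =>
    obtain rfl : i = j := Fin.ext hm.symm
    refine tendsto_const_nhds.congr' ?_
    filter_upwards [Icc_mem_nhdsGT ht] with t htτ
    rw [hΦ.apply_eq_one_of_le (fun t _ _ _ h => triA_apply_eq_zero_of_le h t) le_rfl htτ]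
    simp
  | succ m ih =>
    let k : Fin n := ⟨i + 1, by omega⟩
    have hkj : k ≤ j := by simp only [k, Fin.le_def]; omega
    have hl : (i : ℕ) + 2 ≤ n := by omega
    have hstep := hΦ.tendsto_apply_div_pow_succ ht rfl hkj (ha _ (by omega) hl) (hα _ (by omega) hl)
      (ih hkj (by simp only [k]; omega))
    rw [show (j : ℕ) + 1 = i + 2 + m by omega] at hstep ⊢
    rwa [prod_Icc_div_factorial_succ]

theorem stmt10 (n : ℕ) (hn : 2 ≤ n) (t0 τ : ℝ) (ht : t0 < τ)
    (a : ℕ → ℝ → ℝ) (ha : ARegular n t0 τ a)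
    (Φ : ℝ → Matrix (Fin n) (Fin n) ℝ) (hΦ : IsFundamental n t0 τ (triA n a) Φ)
    (α : ℕ → ℝ)
    (hα : ∀ l, 2 ≤ l → l ≤ n →
      Filter.Tendsto (a l) (nhdsWithin t0 (Set.Ioi t0)) (nhds (α l))) :
    ∀ i j : Fin n, i ≤ j →
      Filter.Tendsto (fun t => Φ t i j / (t - t0) ^ ((j : ℕ) - (i : ℕ)))
        (nhdsWithin t0 (Set.Ioi t0))
        (nhds ((∏ l ∈ Finset.Icc ((i : ℕ) + 2) ((j : ℕ) + 1), α l)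
          / (Nat.factorial ((j : ℕ) - (i : ℕ))))) := by
  intro i j hij
  have hmeas : ∀ l, 2 ≤ l → l ≤ n → StronglyMeasurableAtFilter (a l) (𝓝[>] t0) :=
    fun l hl₂ hl => (ha.1 l hl₂ hl).stronglyMeasurable.stronglyMeasurableAtFilter
  exact stmt10_general ht hmeas hΦ hα hij
end
end

section
/- Assume E_j ≠ 0 for every j = 1, …, n. Then for every t ∈ (t0, τ] the matrix Ψ(t) is symmetric positive definite; equivalently, for every t ∈ (t0, τ] and every nonzero v ∈ ℝⁿ one has ∫_{t0}^t (∑_{j=1}^n v_j ε_j(s)(s − t0)^{j−1})² ds > 0. -/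
open MeasureTheory Matrix Set Filter Topology

noncomputable section

/-- `c(s)_j = ε_j(s) (s - t0)^(j-1)` (1-based), i.e. exponent `(j : ℕ)` with 0-based `Fin n`. -/
def cvec (n : ℕ) (t0 : ℝ) (ε : Fin n → ℝ → ℝ) (s : ℝ) : Fin n → ℝ :=
  fun j => ε j s * (s - t0) ^ (j : ℕ)

/-- `Ψ(t) = ∫_{t0}^t c(s) c(s)ᵀ ds` (entrywise integral). -/
def PsiE (n : ℕ) (t0 : ℝ) (ε : Fin n → ℝ → ℝ) (t : ℝ) : Matrix (Fin n) (Fin n) ℝ :=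
  fun i j => ∫ s in t0..t, cvec n t0 ε s i * cvec n t0 ε s j

/-- The `ε_j` are measurable and bounded on `(t0, τ]` with limit `E_j` as `s → t0⁺`. -/
def ERegular (n : ℕ) (t0 τ : ℝ) (ε : Fin n → ℝ → ℝ) (E : Fin n → ℝ) : Prop :=
  (∀ j, Measurable (ε j)) ∧
  (∀ j, ∃ M : ℝ, ∀ s ∈ Set.Ioc t0 τ, |ε j s| ≤ M) ∧
  (∀ j, Filter.Tendsto (ε j) (nhdsWithin t0 (Set.Ioi t0)) (nhds (E j)))

/-!
As `s → t0⁺`, the functions `ε_j(s) (s - t0)^(j-1)` form an asymptotic scale: each dominates all the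
later ones, because `ε_j` tends to a nonzero limit. A nontrivial linear combination is therefore
equivalent to its first nonzero term and does not vanish just to the right of `t0`, so the functions
are linearly independent in `L²(t0, t)`, and `Ψ(t)` is their Gram matrix there.
-/

section AsymptoticScale

open Asymptotics

variable {ι α 𝕜 F : Type*} {l : Filter α}

/-- An asymptotic scale along `l`: a family of functions, each eventually nonvanishing and each
dominating all the functions of larger index. The leading term of a linear combination is then the
one of smallest index with a nonzero coefficient. -/
structure IsAsymptoticScale [LT ι] [NormedAddCommGroup F] (l : Filter α) (f : ι → α → F) :
    Prop where
  isLittleO : ∀ ⦃i j⦄, i < j → f j =o[l] f i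
  eventually_ne_zero : ∀ i, ∀ᶠ x in l, f i x ≠ 0

namespace IsAsymptoticScale

variable [NormedField 𝕜] [NormedAddCommGroup F] [NormedSpace 𝕜 F] [Fintype ι] [LinearOrder ι]
  {f : ι → α → F} {v : ι → 𝕜}

theorem isEquivalent_sum_smul (hf : IsAsymptoticScale l f) {k : ι} (hk : v k ≠ 0)
    (hv : ∀ j < k, v j = 0) : (fun x => ∑ j, v j • f j x) ~[l] fun x => v k • f k x := by
  have hterm : ∀ j ∈ Finset.univ.erase k, (fun x => v j • f j x) =o[l] fun x => v k • f k x := by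
    intro j hj
    rcases (Finset.ne_of_mem_erase hj).lt_or_gt with hjk | hkj
    · simpa only [hv j hjk, zero_smul] using isLittleO_zero _ _
    · exact ((isLittleO_const_smul_right hk).2 (hf.isLittleO hkj)).const_smul_left (v j)
  refine (IsLittleO.fun_sum hterm).congr_left fun x => ?_
  rw [Pi.sub_apply, Finset.sum_erase_eq_sub (Finset.mem_univ k)]

theorem eventually_sum_smul_ne_zero (hf : IsAsymptoticScale l f) (hv : v ≠ 0) :
    ∀ᶠ x in l, ∑ j, v j • f j x ≠ 0 := by
  obtain ⟨k, hk⟩ := exists_minimal_of_wellFoundedLT (v · ≠ 0) (Function.ne_iff.1 hv)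
  have hlead := hf.isEquivalent_sum_smul hk.prop fun j hj => not_not.1 (hk.not_prop_of_lt hj)
  filter_upwards [hlead.isTheta.eq_zero_iff, hf.eventually_ne_zero k] with x hzero hfk
  exact hzero.not.2 (smul_ne_zero hk.prop hfk)

end IsAsymptoticScale

theorem isAsymptoticScale_mul_pow [Preorder ι] [NormedField 𝕜] {x : α → 𝕜}
    (hx : Tendsto x l (𝓝[≠] 0)) {m : ι → ℕ} (hm : StrictMono m) {c : ι → α → 𝕜} {C : ι → 𝕜}
    (hc : ∀ i, Tendsto (c i) l (𝓝 (C i))) (hC : ∀ i, C i ≠ 0) :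
    IsAsymptoticScale l fun i y => c i y * x y ^ m i where
  isLittleO i j hij := by
    have hci : c i ~[l] fun _ => C i := (isEquivalent_const_iff_tendsto (hC i)).2 (hc i)
    have hcji : c j =O[l] c i :=
      ((hc j).isBigO_one 𝕜).trans ((isBigO_const_const _ (hC i) l).trans hci.isBigO_symm)
    exact hcji.mul_isLittleO
      ((isLittleO_pow_pow (hm hij)).comp_tendsto (hx.mono_right nhdsWithin_le_nhds))
  eventually_ne_zero i := by
    filter_upwards [(hc i).eventually_ne (hC i), hx eventually_mem_nhdsWithin] with y hcy hxy
    exact mul_ne_zero hcy (pow_ne_zero _ hxy)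

end AsymptoticScale

theorem not_ae_eq_zero_of_eventually_nhdsGT_ne_zero {α F : Type*} [LinearOrder α]
    [DenselyOrdered α] [TopologicalSpace α] [OrderTopology α] [MeasurableSpace α]
    {μ : Measure α} [μ.IsOpenPosMeasure] [Zero F] {g : α → F} {a b : α} (hab : a < b)
    (hg : ∀ᶠ x in 𝓝[>] a, g x ≠ 0) : ¬ g =ᵐ[μ.restrict (Ioc a b)] 0 := by
  intro hzero
  obtain ⟨u, hau, hu⟩ := (mem_nhdsGT_iff_exists_Ioo_subset' hab).1 hg
  have hsub : Ioo a (min u b) ⊆ {x | g x ≠ 0} ∩ Ioc a b := fun x hx =>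
    ⟨hu ⟨hx.1, hx.2.trans_le (min_le_left u b)⟩, hx.1, hx.2.le.trans (min_le_right u b)⟩
  have hnull : μ (Ioo a (min u b)) = 0 :=
    measure_mono_null hsub <|
      le_zero_iff.1 ((Measure.le_restrict_apply _ _).trans_eq (ae_iff.1 hzero))
  exact (isOpen_Ioo.measure_pos μ (nonempty_Ioo.2 (lt_min hau hab))).ne' hnull

section GramMatrix

variable {ι α 𝕜 F : Type*} [MeasurableSpace α] {μ : Measure α} [NormedAddCommGroup F]

theorem linearIndependent_toLp_iff [Fintype ι] [NormedRing 𝕜] [Module 𝕜 F] [IsBoundedSMul 𝕜 F]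
    {p : ENNReal} {f : ι → α → F} (hf : ∀ i, MemLp (f i) p μ) :
    LinearIndependent 𝕜 (fun i => (hf i).toLp (f i)) ↔
      ∀ v : ι → 𝕜, (fun x => ∑ i, v i • f i x) =ᵐ[μ] 0 → v = 0 := by
  have hsum (v : ι → 𝕜) : ⇑(∑ i, v i • (hf i).toLp (f i)) =ᵐ[μ] fun x => ∑ i, v i • f i x := by
    have hterm : ∀ᵐ x ∂μ, ∀ i, (v i • (hf i).toLp (f i) : Lp F p μ) x = v i • f i x := by
      refine eventually_countable_forall.2 fun i => ?_
      filter_upwards [Lp.coeFn_smul (v i) ((hf i).toLp (f i)), (hf i).coeFn_toLp] with x hsmul hx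
      rw [hsmul, Pi.smul_apply, hx]
    filter_upwards [Lp.coeFn_finsetSum Finset.univ fun i => v i • (hf i).toLp (f i), hterm]
      with x hx hterm
    simp only [hx, Finset.sum_apply, hterm]
  rw [Fintype.linearIndependent_iff]
  refine forall_congr' fun v => ?_
  rw [Lp.eq_zero_iff_ae_eq_zero, (hsum v).congr_left, funext_iff]
  rfl

open scoped InnerProductSpace ComplexOrder

variable [RCLike 𝕜] [InnerProductSpace 𝕜 F]

theorem gram_toLp {f : ι → α → F} (hf : ∀ i, MemLp (f i) 2 μ) :
    gram 𝕜 (fun i => (hf i).toLp (f i)) = of fun i j => ∫ x, ⟪f i x, f j x⟫_𝕜 ∂μ := by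
  ext i j
  rw [gram_apply, L2.inner_def, of_apply]
  refine integral_congr_ae ?_
  filter_upwards [(hf i).coeFn_toLp, (hf j).coeFn_toLp] with x hi hj
  rw [hi, hj]

theorem posDef_integral_inner_iff [Fintype ι] {f : ι → α → F} (hf : ∀ i, MemLp (f i) 2 μ) :
    (of fun i j => ∫ x, ⟪f i x, f j x⟫_𝕜 ∂μ).PosDef ↔
      ∀ v : ι → 𝕜, (fun x => ∑ i, v i • f i x) =ᵐ[μ] 0 → v = 0 := by
  rw [← gram_toLp hf, posDef_gram_iff_linearIndependent, linearIndependent_toLp_iff]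

end GramMatrix

theorem integral_sq_pos_iff {α : Type*} [MeasurableSpace α] {μ : Measure α} {g : α → ℝ}
    (hg : MemLp g 2 μ) : 0 < ∫ x, g x ^ 2 ∂μ ↔ ¬ g =ᵐ[μ] 0 := by
  have hnonneg : 0 ≤ fun x => g x ^ 2 := fun x => sq_nonneg (g x)
  rw [(integral_nonneg hnonneg).lt_iff_ne', Ne, integral_eq_zero_iff_of_nonneg hnonneg
    hg.integrable_sq]
  simp only [EventuallyEq, Pi.zero_apply, sq_eq_zero_iff]

namespace ERegular

variable {n : ℕ} {t0 τ : ℝ} {ε : Fin n → ℝ → ℝ} {E : Fin n → ℝ}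

theorem isAsymptoticScale_cvec (hreg : ERegular n t0 τ ε E) (hE : ∀ j, E j ≠ 0) :
    IsAsymptoticScale (𝓝[>] t0) fun j s => cvec n t0 ε s j := by
  have hsub : Tendsto (· - t0) (𝓝[>] t0) (𝓝[≠] 0) := by
    refine tendsto_nhdsWithin_iff.2 ⟨?_, ?_⟩
    · exact tendsto_sub_nhds_zero_iff.2 nhdsWithin_le_nhds
    · filter_upwards [self_mem_nhdsWithin] with s hs using sub_ne_zero.2 (ne_of_gt hs)
  exact isAsymptoticScale_mul_pow hsub Fin.val_strictMono hreg.2.2 hE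

theorem memLp_cvec (hreg : ERegular n t0 τ ε E) (p : ENNReal) (j : Fin n) :
    MemLp (fun s => cvec n t0 ε s j) p (volume.restrict (Ioc t0 τ)) := by
  obtain ⟨hmeas, hbound, -⟩ := hreg
  obtain ⟨M, hM⟩ := hbound j
  have hcmeas : Measurable fun s => cvec n t0 ε s j :=
    (hmeas j).mul ((measurable_id.sub_const t0).pow_const _)
  refine MemLp.of_bound hcmeas.aestronglyMeasurable (M * (τ - t0) ^ (j : ℕ)) ?_
  filter_upwards [ae_restrict_mem measurableSet_Ioc] with s hs
  have hs0 : 0 ≤ s - t0 := sub_nonneg.2 hs.1.le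
  calc ‖cvec n t0 ε s j‖ = |ε j s| * (s - t0) ^ (j : ℕ) := by
        rw [cvec, norm_mul, Real.norm_eq_abs, Real.norm_of_nonneg (pow_nonneg hs0 _)]
    _ ≤ M * (τ - t0) ^ (j : ℕ) := by
        have hM0 : 0 ≤ M := (abs_nonneg _).trans (hM s hs)
        gcongr
        exacts [hM s hs, hs.2]

end ERegular

theorem PsiE_eq_integral_inner {n : ℕ} {t0 t : ℝ} (ε : Fin n → ℝ → ℝ) (ht : t0 ≤ t) :
    PsiE n t0 ε t =
      of fun i j => ∫ s in Ioc t0 t, inner ℝ (cvec n t0 ε s i) (cvec n t0 ε s j) := by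
  ext i j
  simp only [PsiE, intervalIntegral.integral_of_le ht, of_apply, RCLike.inner_apply', conj_trivial]

theorem stmt11 (n : ℕ) (hn : 1 ≤ n) (t0 τ : ℝ) (ht : t0 < τ)
    (ε : Fin n → ℝ → ℝ) (E : Fin n → ℝ) (hreg : ERegular n t0 τ ε E)
    (hE : ∀ j, E j ≠ 0) :
    ∀ t ∈ Set.Ioc t0 τ,
      (PsiE n t0 ε t).PosDef ∧
      ∀ v : Fin n → ℝ, v ≠ 0 →
        0 < ∫ s in t0..t, (∑ j : Fin n, v j * ε j s * (s - t0) ^ (j : ℕ)) ^ 2 := by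
  intro t ht'
  have hL2 (j : Fin n) : MemLp (fun s => cvec n t0 ε s j) 2 (volume.restrict (Ioc t0 t)) :=
    (hreg.memLp_cvec 2 j).mono_measure (Measure.restrict_mono_set _ (Ioc_subset_Ioc_right ht'.2))
  have hne (v : Fin n → ℝ) (hv : v ≠ 0) :
      ¬ (fun s => ∑ j, v j • cvec n t0 ε s j) =ᵐ[volume.restrict (Ioc t0 t)] 0 :=
    not_ae_eq_zero_of_eventually_nhdsGT_ne_zero ht'.1
      ((hreg.isAsymptoticScale_cvec hE).eventually_sum_smul_ne_zero hv)
  refine ⟨?_, fun v hv => ?_⟩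
  · rw [PsiE_eq_integral_inner ε ht'.1.le]
    exact (posDef_integral_inner_iff hL2).2 fun v => not_imp_not.1 (hne v)
  · have hcomb : MemLp (fun s => ∑ j, v j • cvec n t0 ε s j) 2 (volume.restrict (Ioc t0 t)) :=
      memLp_finsetSum _ fun j _ => (hL2 j).const_smul (v j)
    rw [intervalIntegral.integral_of_le ht'.1.le]
    simpa only [cvec, smul_eq_mul, mul_assoc] using (integral_sq_pos_iff hcomb).2 (hne v hv)
end
end

section
/- For all indices 1 ≤ i, j ≤ n: lim_{t→t0⁺} Ψ(t)_{ij} / (t − t0)^{i+j−1} = E_i E_j / (i + j − 1). -/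
open MeasureTheory Matrix Set Filter Topology

noncomputable section

/-!
With 1-based indices, the integrand of `Ψ(t)_{ij}` is the weight `(s - t0)^(i+j-2)` times a function
tending to `E_i E_j` at `t0`, and averaging against a nonnegative weight preserves limits: the error
term is `o(weight)`, so its integral is `o(∫ weight)`. The weight itself integrates to
`(t - t0)^(i+j-1) / (i+j-1)`.
-/

section AtFilter

variable {α E : Type*} [MeasurableSpace α] {μ : Measure α} {l : Filter α} [NormedAddCommGroup E]
  [NormedSpace ℝ E] {w : α → ℝ} {f : α → E} {c : E}

theorem stronglyMeasurableAtFilter_smul (hw : StronglyMeasurableAtFilter w l μ)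
    (hf : StronglyMeasurableAtFilter f l μ) :
    StronglyMeasurableAtFilter (fun s => w s • f s) l μ := by
  obtain ⟨u, hu, hwu⟩ := hw
  obtain ⟨v, hv, hfv⟩ := hf
  exact ⟨u ∩ v, inter_mem hu hv,
    (hwu.mono_set inter_subset_left).smul (hfv.mono_set inter_subset_right)⟩

theorem integrableAtFilter_smul_of_tendsto [l.IsMeasurablyGenerated]
    (hw : IntegrableAtFilter w l μ) (hfm : StronglyMeasurableAtFilter f l μ)
    (hf : Tendsto f l (𝓝 c)) : IntegrableAtFilter (fun s => w s • f s) l μ := by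
  have hwm : StronglyMeasurableAtFilter w l μ := hw.imp fun _ h => ⟨h.1, h.2.aestronglyMeasurable⟩
  have hO : (fun s => w s • f s) =O[l] w := by
    simpa only [smul_eq_mul, mul_one] using
      (Asymptotics.isBigO_refl w l).smul (hf.isBigO_one ℝ)
  exact hO.integrableAtFilter (stronglyMeasurableAtFilter_smul hwm hfm) hw

end AtFilter

theorem eventually_intervalIntegrable_nhdsGT {E : Type*} [NormedAddCommGroup E] {μ : Measure ℝ}
    {a : ℝ} {f : ℝ → E} (hf : IntegrableAtFilter f (𝓝[>] a) μ) :
    ∀ᶠ t in 𝓝[>] a, IntervalIntegrable f μ a t := by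
  obtain ⟨u, hu, hfu⟩ := hf
  obtain ⟨b, hb, hbu⟩ := mem_nhdsGT_iff_exists_Ioo_subset.1 hu
  filter_upwards [Ioo_mem_nhdsGT hb] with t ht
  exact (intervalIntegrable_iff_integrableOn_Ioc_of_le ht.1.le).2 <|
    hfu.mono_set fun s hs => hbu ⟨hs.1, hs.2.trans_lt ht.2⟩

section WeightedMean

variable {E : Type*} [NormedAddCommGroup E] [NormedSpace ℝ E] {μ : Measure ℝ} {a : ℝ}
  {w : ℝ → ℝ} {f : ℝ → E} {c : E}

theorem isLittleO_intervalIntegral_nhdsGT_s12 (hw : IntegrableAtFilter w (𝓝[>] a) μ)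
    (hw0 : ∀ᶠ s in 𝓝[>] a, 0 ≤ w s) (hfw : f =o[𝓝[>] a] w) :
    (fun t => ∫ s in a..t, f s ∂μ) =o[𝓝[>] a] fun t => ∫ s in a..t, w s ∂μ := by
  refine Asymptotics.isLittleO_iff.2 fun δ hδ => ?_
  obtain ⟨b, hb, hbound⟩ := mem_nhdsGT_iff_exists_Ioo_subset.1 (hw0.and (hfw.bound hδ))
  filter_upwards [Ioo_mem_nhdsGT hb, eventually_intervalIntegrable_nhdsGT hw] with t ht hwt
  have hle : ∀ s ∈ Ioc a t, ‖f s‖ ≤ δ * w s := fun s hs => by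
    obtain ⟨hws, hfs⟩ := hbound ⟨hs.1, hs.2.trans_lt ht.2⟩
    rwa [Real.norm_of_nonneg hws] at hfs
  calc ‖∫ s in a..t, f s ∂μ‖
      ≤ ∫ s in a..t, δ * w s ∂μ :=
        intervalIntegral.norm_integral_le_of_norm_le ht.1.le (.of_forall hle) (hwt.const_mul δ)
    _ = δ * ∫ s in a..t, w s ∂μ := intervalIntegral.integral_const_mul δ w
    _ ≤ δ * ‖∫ s in a..t, w s ∂μ‖ := by gcongr; exact Real.le_norm_self _

theorem isLittleO_integral_smul_sub_nhdsGT [CompleteSpace E]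
    (hw : IntegrableAtFilter w (𝓝[>] a) μ) (hw0 : ∀ᶠ s in 𝓝[>] a, 0 ≤ w s)
    (hfm : StronglyMeasurableAtFilter f (𝓝[>] a) μ) (hf : Tendsto f (𝓝[>] a) (𝓝 c)) :
    (fun t => (∫ s in a..t, w s • f s ∂μ) - (∫ s in a..t, w s ∂μ) • c)
      =o[𝓝[>] a] fun t => ∫ s in a..t, w s ∂μ := by
  have herror : (fun s => w s • (f s - c)) =o[𝓝[>] a] w := by
    simpa only [smul_eq_mul, mul_one] using (Asymptotics.isBigO_refl w _).smul_isLittleO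
      ((Asymptotics.isLittleO_one_iff ℝ).2 (tendsto_sub_nhds_zero_iff.2 hf))
  refine (isLittleO_intervalIntegral_nhdsGT_s12 hw hw0 herror).congr' ?_ .rfl
  filter_upwards [eventually_intervalIntegrable_nhdsGT hw, eventually_intervalIntegrable_nhdsGT
    (integrableAtFilter_smul_of_tendsto hw hfm hf)] with t hwt hwft
  simp only [smul_sub]
  rw [intervalIntegral.integral_sub hwft (hwt.smul_continuousOn continuousOn_const),
    intervalIntegral.integral_smul_const]

theorem tendsto_inv_integral_smul_integral_smul_nhdsGT [CompleteSpace E]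
    (hw : IntegrableAtFilter w (𝓝[>] a) μ) (hw0 : ∀ᶠ s in 𝓝[>] a, 0 ≤ w s)
    (hW : ∀ᶠ t in 𝓝[>] a, ∫ s in a..t, w s ∂μ ≠ 0)
    (hfm : StronglyMeasurableAtFilter f (𝓝[>] a) μ) (hf : Tendsto f (𝓝[>] a) (𝓝 c)) :
    Tendsto (fun t => (∫ s in a..t, w s ∂μ)⁻¹ • ∫ s in a..t, w s • f s ∂μ) (𝓝[>] a) (𝓝 c) := by
  refine tendsto_sub_nhds_zero_iff.1 <|
    (isLittleO_integral_smul_sub_nhdsGT hw hw0 hfm hf).tendsto_inv_smul_nhds_zero.congr' ?_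
  filter_upwards [hW] with t ht
  rw [smul_sub, inv_smul_smul₀ ht]

end WeightedMean

section PowerWeight

variable {a p : ℝ}

theorem integrableAtFilter_sub_rpow_nhdsGT (hp : -1 < p) :
    IntegrableAtFilter (fun s => (s - a) ^ p) (𝓝[>] a) := by
  have h : IntervalIntegrable (fun s => (s - a) ^ p) volume a (a + 1) := by
    simpa [add_comm] using
      (intervalIntegral.intervalIntegrable_rpow' (a := 0) (b := 1) hp).comp_sub_right a
  exact ⟨Ioc a (a + 1), Ioc_mem_nhdsGT (lt_add_one a), h.1⟩

theorem integral_sub_rpow (hp : -1 < p) (t : ℝ) :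
    ∫ s in a..t, (s - a) ^ p = (t - a) ^ (p + 1) / (p + 1) := by
  rw [intervalIntegral.integral_comp_sub_right (fun x => x ^ p) a, integral_rpow (.inl hp),
    sub_self, Real.zero_rpow (by linarith), sub_zero]

theorem tendsto_integral_sub_rpow_smul_nhdsGT {E : Type*} [NormedAddCommGroup E] [NormedSpace ℝ E]
    [CompleteSpace E] {f : ℝ → E} {c : E} (hp : -1 < p)
    (hfm : StronglyMeasurableAtFilter f (𝓝[>] a)) (hf : Tendsto f (𝓝[>] a) (𝓝 c)) :
    Tendsto (fun t => ((t - a) ^ (p + 1))⁻¹ • ∫ s in a..t, (s - a) ^ p • f s)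
      (𝓝[>] a) (𝓝 ((p + 1)⁻¹ • c)) := by
  have hp1 : 0 < p + 1 := by linarith
  have hw0 : ∀ᶠ s in 𝓝[>] a, 0 ≤ (s - a) ^ p := by
    filter_upwards [self_mem_nhdsWithin] with s hs
    exact Real.rpow_nonneg (sub_nonneg.2 hs.le) p
  have hW : ∀ᶠ t in 𝓝[>] a, ∫ s in a..t, (s - a) ^ p ≠ 0 := by
    filter_upwards [self_mem_nhdsWithin] with t ht
    rw [integral_sub_rpow hp]
    exact (div_pos (Real.rpow_pos_of_pos (sub_pos.2 ht) _) hp1).ne'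
  refine ((tendsto_inv_integral_smul_integral_smul_nhdsGT (integrableAtFilter_sub_rpow_nhdsGT hp)
    hw0 hW hfm hf).const_smul (p + 1)⁻¹).congr fun t => ?_
  rw [integral_sub_rpow hp, smul_smul, inv_div, inv_mul_eq_div, div_div_cancel_left' hp1.ne']

end PowerWeight

theorem stmt12_general {a p q c d : ℝ} {f g : ℝ → ℝ} (hpq : -1 < p + q)
    (hfm : StronglyMeasurableAtFilter f (𝓝[>] a)) (hgm : StronglyMeasurableAtFilter g (𝓝[>] a))
    (hf : Tendsto f (𝓝[>] a) (𝓝 c)) (hg : Tendsto g (𝓝[>] a) (𝓝 d)) :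
    Tendsto (fun t => (∫ s in a..t, f s * (s - a) ^ p * (g s * (s - a) ^ q)) /
        (t - a) ^ (p + q + 1)) (𝓝[>] a) (𝓝 (c * d / (p + q + 1))) := by
  have hlim := tendsto_integral_sub_rpow_smul_nhdsGT hpq
    (stronglyMeasurableAtFilter_smul hfm hgm) (hf.smul hg)
  simp only [smul_eq_mul, inv_mul_eq_div] at hlim
  refine hlim.congr' ?_
  filter_upwards [self_mem_nhdsWithin] with t (ht : a < t)
  congr 1
  refine intervalIntegral.integral_congr_Ioo_of_le ht.le fun s hs => ?_
  simp only [Real.rpow_add (sub_pos.2 hs.1)]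
  ring

theorem stmt12 (n : ℕ) (hn : 1 ≤ n) (t0 τ : ℝ) (ht : t0 < τ)
    (ε : Fin n → ℝ → ℝ) (E : Fin n → ℝ) (hreg : ERegular n t0 τ ε E) :
    ∀ i j : Fin n,
      Filter.Tendsto (fun t => PsiE n t0 ε t i j / (t - t0) ^ ((i : ℕ) + (j : ℕ) + 1))
        (nhdsWithin t0 (Set.Ioi t0))
        (nhds (E i * E j / (((i : ℕ) + (j : ℕ) + 1 : ℕ) : ℝ))) := by
  intro i j
  exact_mod_cast stmt12_general (p := (i : ℕ)) (q := (j : ℕ)) (by linarith)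
    (hreg.1 i).stronglyMeasurable.stronglyMeasurableAtFilter
    (hreg.1 j).stronglyMeasurable.stronglyMeasurableAtFilter (hreg.2.2 i) (hreg.2.2 j)
end
end

section
/- Let R > 0 and L > 0 be such that |f_n(t, z1) − f_n(t, z2)| ≤ L |z1 − z2| for all t ∈ [t0, τ] and all z1, z2 ∈ ℝⁿ with |z1|, |z2| ≤ R. Then there exists a constant K > 0 such that for every t ∈ (t0, τ], every pair of continuous functions d1, d2 : [t0, t] → ℝⁿ with sup norms at most R, and every component index i = 1, …, n: |(Ξ(t; d1) − Ξ(t; d2))_i| ≤ K (t − t0)^{n+i} · sup_{s ∈ [t0,t]} |d1(s) − d2(s)|. -/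
open MeasureTheory Matrix Set Filter Topology

noncomputable section

/-- The output row vector `C = (1, 0, …, 0)`. -/
def triC (n : ℕ) : Matrix (Fin 1) (Fin n) ℝ :=
  Matrix.of fun _ j => if (j : ℕ) = 0 then 1 else 0

/-- The triangular vector field `g(t,x) = (f_1(t), …, f_{n-1}(t), f_n(t,x))ᵀ`. -/
def triG (n : ℕ) (f : ℕ → ℝ → ℝ) (fn : ℝ → (Fin n → ℝ) → ℝ)
    (t : ℝ) (x : Fin n → ℝ) : Fin n → ℝ :=
  fun i => if (i : ℕ) = n - 1 then fn t x else f ((i : ℕ) + 1) t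

/-- Regularity of the triangular data: `a_l`, `f_l` measurable and bounded on `[t0,τ]`,
`f_n` measurable in `t` and continuous in `x`. -/
def TriRegular (n : ℕ) (t0 τ : ℝ) (a f : ℕ → ℝ → ℝ)
    (fn : ℝ → (Fin n → ℝ) → ℝ) : Prop :=
  (∀ l, 2 ≤ l → l ≤ n → Measurable (a l)) ∧
  (∀ l, 2 ≤ l → l ≤ n → ∃ M : ℝ, ∀ t ∈ Set.Icc t0 τ, |a l t| ≤ M) ∧
  (∀ l, 1 ≤ l → l ≤ n - 1 → Measurable (f l)) ∧
  (∀ l, 1 ≤ l → l ≤ n - 1 → ∃ M : ℝ, ∀ t ∈ Set.Icc t0 τ, |f l t| ≤ M) ∧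
  (∀ v : Fin n → ℝ, Measurable fun t => fn t v) ∧
  (∀ t ∈ Set.Icc t0 τ, Continuous (fn t))

/-!
The matrix `Φ t` is unit upper triangular and, by iterated integration along the superdiagonal of
`A`, its `(i, j)` entry is `O((t - t0) ^ (j - i))`; solving `Φ Φ⁻¹ = 1` from the bottom row upwards
gives the same orders for `Φ⁻¹`. Only the last component of `g` depends on the state, so component
`k` of `Φ⁻¹ (g(·, d1) - g(·, d2))` is `(Φ⁻¹)_{k,n-1}` times a bounded function, hence of order
`n - 1 - k`. Integrating makes this `n - k`, pairing with `C Φ = (Φ_{0,k})_k` makes every summand of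
order `n`, and the factor `Φ_{0,i}` together with the outer integral yields `n + i + 1`, with
zero-based `i`.

Since `f_n` need not be bounded, `Φ⁻¹ g(·, d1)` and `Φ⁻¹ g(·, d2)` may fail to be integrable; only
their difference is estimated.
-/

theorem exists_ae_norm_le_of_memLp_top {ι α E : Type*} [MeasurableSpace α] {μ : Measure α}
    [NormedAddCommGroup E] {u : ι → α → E} (F : Finset ι) (hu : ∀ l ∈ F, MemLp (u l) ⊤ μ) :
    ∃ M, 1 ≤ M ∧ ∀ l ∈ F, ∀ᵐ x ∂μ, ‖u l x‖ ≤ M := by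
  have hsum : 0 ≤ ∑ l ∈ F, lpNorm (u l) ⊤ μ := Finset.sum_nonneg fun _ _ => lpNorm_nonneg
  refine ⟨1 + ∑ l ∈ F, lpNorm (u l) ⊤ μ, le_add_of_nonneg_right hsum, fun l hl => ?_⟩
  have hsingle : lpNorm (u l) ⊤ μ ≤ ∑ l ∈ F, lpNorm (u l) ⊤ μ :=
    Finset.single_le_sum (fun _ _ => lpNorm_nonneg) hl
  filter_upwards [ae_le_lpNorm_exponent_top (hu l hl)] with x hx
  linarith

theorem memLp_top_restrict_of_exists_forall_mem_norm_le {α E : Type*} [MeasurableSpace α]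
    {μ : Measure α} [NormedAddCommGroup E] {s : Set α} {u : α → E} (hs : MeasurableSet s)
    (hu : AEStronglyMeasurable u (μ.restrict s)) (hbound : ∃ M : ℝ, ∀ x ∈ s, ‖u x‖ ≤ M) :
    MemLp u ⊤ (μ.restrict s) :=
  let ⟨M, hM⟩ := hbound
  memLp_top_of_bound hu M (ae_restrict_of_forall_mem hs hM)

theorem aestronglyMeasurable_comp_of_continuous {α X Y : Type*} [MeasurableSpace α]
    {μ : Measure α} {s : Set α} (hs : MeasurableSet s)
    [TopologicalSpace X] [TopologicalSpace.MetrizableSpace X] [SecondCountableTopology X]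
    [MeasurableSpace X] [OpensMeasurableSpace X]
    [TopologicalSpace Y] [TopologicalSpace.PseudoMetrizableSpace Y] [SecondCountableTopology Y]
    [MeasurableSpace Y] [BorelSpace Y] [Zero Y]
    {F : α → X → Y} (hmeas : ∀ x, Measurable fun t => F t x) (hcont : ∀ t ∈ s, Continuous (F t))
    {d : α → X} (hd : AEMeasurable d (μ.restrict s)) :
    AEStronglyMeasurable (fun t => F t (d t)) (μ.restrict s) := by
  have hjoint : Measurable
      (Function.uncurry fun (x : X) (t : α) => s.indicator (fun u => F u x) t) := by
    refine measurable_uncurry_of_continuous_of_measurable (fun t => ?_)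
      fun x => (hmeas x).indicator hs
    by_cases ht : t ∈ s
    · simpa only [indicator_of_mem ht] using hcont t ht
    · simpa only [indicator_of_notMem ht] using continuous_const
  refine ((hjoint.comp_aemeasurable (hd.prodMk aemeasurable_id)).congr ?_).aestronglyMeasurable
  filter_upwards [ae_restrict_mem hs] with t ht
  exact indicator_of_mem ht fun u => F u (d t)

theorem continuousOn_matrix_inv {X m 𝕜 : Type*} [TopologicalSpace X] [Fintype m] [DecidableEq m]
    [NormedField 𝕜] {Φ : X → Matrix m m 𝕜} {s : Set X} (hΦ : ContinuousOn Φ s)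
    (hdet : ∀ x ∈ s, IsUnit (Φ x).det) : ContinuousOn (fun x => (Φ x)⁻¹) s := by
  intro x hx
  refine (continuousAt_matrix_inv (Φ x) ?_).comp_continuousWithinAt (hΦ x hx)
  rw [Ring.inverse_eq_inv']
  exact continuousAt_inv₀ (hdet x hx).ne_zero

section PowerBounds

variable {a b C D : ℝ} {p q : ℕ}

/-- `w` is measurable and of size at most `C (s - a) ^ p` at every `s ∈ (a, b]`. All the functions
compared below vanish to finite order at the left endpoint; this records the order. -/
structure IsPowBounded (a b C : ℝ) (p : ℕ) (w : ℝ → ℝ) : Prop where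
  aestronglyMeasurable : AEStronglyMeasurable w (volume.restrict (Ioc a b))
  abs_le : ∀ s ∈ Ioc a b, |w s| ≤ C * (s - a) ^ p

theorem norm_intervalIntegral_le_mul_pow {E : Type*} [NormedAddCommGroup E] [NormedSpace ℝ E]
    {w : ℝ → E} (hab : a ≤ b) (hC : 0 ≤ C)
    (hw : ∀ᵐ s, s ∈ Ioc a b → ‖w s‖ ≤ C * (s - a) ^ p) :
    ‖∫ s in a..b, w s‖ ≤ C * (b - a) ^ (p + 1) := by
  have hba : 0 ≤ b - a := sub_nonneg.2 hab
  have hbound : ∀ᵐ s, s ∈ uIoc a b → ‖w s‖ ≤ C * (b - a) ^ p := by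
    filter_upwards [hw] with s hs hmem
    rw [uIoc_of_le hab] at hmem
    have hsa : 0 ≤ s - a := sub_nonneg.2 hmem.1.le
    exact (hs hmem).trans (by gcongr; exact hmem.2)
  calc ‖∫ s in a..b, w s‖ ≤ C * (b - a) ^ p * |b - a| :=
        intervalIntegral.norm_integral_le_of_norm_le_const_ae hbound
    _ = C * (b - a) ^ (p + 1) := by rw [abs_of_nonneg hba]; ring

/-- If `u` is not integrable then neither is `v`, and both integrals take the junk value `0`. -/
theorem intervalIntegral_sub_intervalIntegral_eq_indicator {E : Type*} [NormedAddCommGroup E]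
    [NormedSpace ℝ E] {u v : ℝ → E}
    (h : IntervalIntegrable (fun s => u s - v s) volume a b) :
    (∫ s in a..b, u s) - ∫ s in a..b, v s =
      {ρ | IntervalIntegrable u volume a ρ}.indicator
        (fun ρ => ∫ s in a..ρ, (u s - v s)) b := by
  by_cases hu : IntervalIntegrable u volume a b
  · have hv : IntervalIntegrable v volume a b := by simpa using hu.sub h
    rw [indicator_of_mem (by exact hu), intervalIntegral.integral_sub hu hv]
  · have hv : ¬ IntervalIntegrable v volume a b := fun hv => hu (by simpa using h.add hv)
    rw [indicator_of_notMem (by exact hu), intervalIntegral.integral_undef hu,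
      intervalIntegral.integral_undef hv, sub_zero]

theorem ordConnected_setOf_intervalIntegrable {E : Type*} [NormedAddCommGroup E] (u : ℝ → E)
    (a : ℝ) :
    OrdConnected {ρ | IntervalIntegrable u volume a ρ} := by
  refine ⟨fun x hx y hy z hz => ?_⟩
  rcases le_total z a with hza | haz
  · exact hx.mono_set (uIcc_subset_uIcc left_mem_uIcc (mem_uIcc.2 (.inr ⟨hz.1, hza⟩)))
  · exact hy.mono_set (uIcc_subset_uIcc left_mem_uIcc (mem_uIcc.2 (.inl ⟨haz, hz.2⟩)))

namespace IsPowBounded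

variable {w : ℝ → ℝ}

theorem of_continuousOn (hw : ContinuousOn w (Ioc a b))
    (h : ∀ s ∈ Ioc a b, |w s| ≤ C * (s - a) ^ p) :
    IsPowBounded a b C p w :=
  ⟨hw.aestronglyMeasurable measurableSet_Ioc, h⟩

theorem const_nonneg (hw : IsPowBounded a b C p w) {s : ℝ} (hs : s ∈ Ioc a b) : 0 ≤ C :=
  nonneg_of_mul_nonneg_left ((abs_nonneg _).trans (hw.abs_le s hs))
    (pow_pos (sub_pos.2 hs.1) p)

theorem mono_right {b' : ℝ} (hw : IsPowBounded a b C p w) (hb : b' ≤ b) :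
    IsPowBounded a b' C p w :=
  ⟨hw.aestronglyMeasurable.mono_measure
      (Measure.restrict_mono (Ioc_subset_Ioc_right hb) le_rfl),
    fun s hs => hw.abs_le s ⟨hs.1, hs.2.trans hb⟩⟩

theorem mul {x : ℝ → ℝ} (hw : IsPowBounded a b C p w) (hx : IsPowBounded a b D q x) :
    IsPowBounded a b (C * D) (p + q) (fun s => w s * x s) := by
  refine ⟨hw.aestronglyMeasurable.mul hx.aestronglyMeasurable, fun s hs => ?_⟩
  calc |w s * x s| = |w s| * |x s| := abs_mul _ _
    _ ≤ (C * (s - a) ^ p) * (D * (s - a) ^ q) :=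
        mul_le_mul (hw.abs_le s hs) (hx.abs_le s hs) (abs_nonneg _)
          ((abs_nonneg _).trans (hw.abs_le s hs))
    _ = C * D * (s - a) ^ (p + q) := by ring

theorem sum {ι : Type*} {x : ι → ℝ → ℝ} (F : Finset ι)
    (hx : ∀ k ∈ F, IsPowBounded a b C p (x k)) :
    IsPowBounded a b (F.card * C) p (fun s => ∑ k ∈ F, x k s) := by
  refine ⟨Finset.aestronglyMeasurable_fun_sum F fun k hk => (hx k hk).aestronglyMeasurable,
    fun s hs => ?_⟩
  calc |∑ k ∈ F, x k s| ≤ ∑ k ∈ F, |x k s| := Finset.abs_sum_le_sum_abs _ _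
    _ ≤ F.card • (C * (s - a) ^ p) :=
        Finset.sum_le_card_nsmul F _ _ fun k hk => (hx k hk).abs_le s hs
    _ = F.card * C * (s - a) ^ p := by rw [nsmul_eq_mul, mul_assoc]

theorem integrableOn (hw : IsPowBounded a b C p w) : IntegrableOn w (Ioc a b) := by
  refine IntegrableOn.of_bound measure_Ioc_lt_top hw.aestronglyMeasurable (C * (b - a) ^ p) ?_
  filter_upwards [ae_restrict_mem measurableSet_Ioc] with s hs
  have hC : 0 ≤ C := hw.const_nonneg hs
  have hsa : 0 ≤ s - a := sub_nonneg.2 hs.1.le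
  exact (hw.abs_le s hs).trans (by gcongr; exact hs.2)

theorem integral_sub {u v : ℝ → ℝ} (h : IsPowBounded a b C p (fun s => u s - v s)) :
    IsPowBounded a b C (p + 1) (fun ρ => (∫ s in a..ρ, u s) - ∫ s in a..ρ, v s) := by
  have heq : ∀ ρ ∈ Ioc a b, (∫ s in a..ρ, u s) - ∫ s in a..ρ, v s =
      {ρ | IntervalIntegrable u volume a ρ}.indicator
        (fun ρ => ∫ s in a..ρ, (u s - v s)) ρ := fun ρ hρ =>
    intervalIntegral_sub_intervalIntegral_eq_indicator
      ((intervalIntegrable_iff_integrableOn_Ioc_of_le hρ.1.le).2 (h.mono_right hρ.2).integrableOn)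
  constructor
  · rcases le_or_gt b a with hba | hab
    · simp [Ioc_eq_empty hba.not_gt]
    have hcont : ContinuousOn (fun ρ => ∫ s in a..ρ, (u s - v s)) (uIcc a b) :=
      intervalIntegral.continuousOn_primitive_interval (by
        rw [uIcc_of_le hab.le, integrableOn_Icc_iff_integrableOn_Ioc]; exact h.integrableOn)
    have hmeas := (hcont.mono (Ioc_subset_Icc_self.trans Icc_subset_uIcc)).aestronglyMeasurable
      (μ := volume) measurableSet_Ioc
    refine (hmeas.indicator (ordConnected_setOf_intervalIntegrable u a).measurableSet).congr ?_
    filter_upwards [ae_restrict_mem measurableSet_Ioc] with ρ hρ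
    exact (heq ρ hρ).symm
  · intro ρ hρ
    rw [heq ρ hρ]
    have hC : 0 ≤ C := h.const_nonneg hρ
    have hbound : ‖∫ s in a..ρ, (u s - v s)‖ ≤ C * (ρ - a) ^ (p + 1) :=
      norm_intervalIntegral_le_mul_pow hρ.1.le hC
        (.of_forall fun s hs => h.abs_le s ⟨hs.1, hs.2.trans hρ.2⟩)
    exact (norm_indicator_le_norm_self (fun ρ => ∫ s in a..ρ, (u s - v s)) ρ).trans hbound

end IsPowBounded

end PowerBounds

section UnitUpperTriangular

theorem mul_apply_eq_sum_Icc_of_isUpperTriangular {m R : Type*} [Fintype m] [LinearOrder m]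
    [LocallyFiniteOrder m] [NonUnitalNonAssocSemiring R] {P X : Matrix m m R}
    (hP : P.IsUpperTriangular) (hX : X.IsUpperTriangular) (i j : m) :
    (P * X) i j = ∑ k ∈ Finset.Icc i j, P i k * X k j := by
  rw [Matrix.mul_apply]
  refine (Finset.sum_subset (Finset.subset_univ _) fun k _ hk => ?_).symm
  rw [Finset.mem_Icc, not_and_or, not_le, not_le] at hk
  rcases hk with hki | hjk
  · rw [hP hki, zero_mul]
  · rw [hX hjk, mul_zero]

variable {n : ℕ} {R : Type*} [CommRing R] [LinearOrder R] {r : R}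
  {P : Matrix (Fin n) (Fin n) R}

/-- `P` is unit upper triangular and its entries decay geometrically away from the diagonal: this
is the shape of the fundamental matrix `Φ t`, with `r` proportional to `t - t0`. -/
structure IsGradedUnitriangular (r : R) (P : Matrix (Fin n) (Fin n) R) : Prop where
  isUpperTriangular : P.IsUpperTriangular
  diag : ∀ i, P i i = 1
  abs_le : ∀ i j, i ≤ j → |P i j| ≤ r ^ ((j : ℕ) - i)

namespace IsGradedUnitriangular

theorem det_eq_one (hP : IsGradedUnitriangular r P) : P.det = 1 := by
  rw [Matrix.det_of_isUpperTriangular hP.isUpperTriangular]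
  exact Finset.prod_eq_one fun i _ => hP.diag i

theorem isUnit_det (hP : IsGradedUnitriangular r P) : IsUnit P.det :=
  hP.det_eq_one ▸ isUnit_one

theorem isUpperTriangular_inv (hP : IsGradedUnitriangular r P) : P⁻¹.IsUpperTriangular :=
  haveI := P.invertibleOfIsUnitDet hP.isUnit_det
  Matrix.blockTriangular_inv_of_blockTriangular hP.isUpperTriangular

theorem sum_Icc_mul_inv (hP : IsGradedUnitriangular r P) (i j : Fin n) :
    ∑ k ∈ Finset.Icc i j, P i k * P⁻¹ k j = (1 : Matrix (Fin n) (Fin n) R) i j := by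
  rw [← Matrix.mul_nonsing_inv P hP.isUnit_det,
    mul_apply_eq_sum_Icc_of_isUpperTriangular hP.isUpperTriangular hP.isUpperTriangular_inv]

theorem inv_diag (hP : IsGradedUnitriangular r P) (i : Fin n) : P⁻¹ i i = 1 := by
  simpa [hP.diag] using hP.sum_Icc_mul_inv i i

theorem inv_apply_of_lt (hP : IsGradedUnitriangular r P) {i j : Fin n} (hij : i < j) :
    P⁻¹ i j = -∑ k ∈ Finset.Ioc i j, P i k * P⁻¹ k j := by
  have hsum := hP.sum_Icc_mul_inv i j
  rw [← Finset.add_sum_Ioc_eq_sum_Icc hij.le, hP.diag, one_mul,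
    Matrix.one_apply_ne hij.ne] at hsum
  exact eq_neg_of_add_eq_zero_left hsum

theorem inv [IsStrictOrderedRing R] (hr : 0 ≤ r) (hP : IsGradedUnitriangular r P) :
    IsGradedUnitriangular (n * r) P⁻¹ := by
  refine ⟨hP.isUpperTriangular_inv, hP.inv_diag, fun i j hij => ?_⟩
  induction i using WellFoundedGT.induction with
  | _ i ih =>
  rcases hij.eq_or_lt with rfl | hlt
  · simp [hP.inv_diag]
  obtain ⟨d, hd⟩ : ∃ d : ℕ, (j : ℕ) - i = d + 1 := ⟨j - i - 1, by omega⟩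
  have hterm : ∀ k ∈ Finset.Ioc i j, |P i k * P⁻¹ k j| ≤ n ^ d * r ^ (d + 1) := by
    intro k hk
    obtain ⟨hik, hkj⟩ := Finset.mem_Ioc.1 hk
    have hn : (1 : R) ≤ n := by exact_mod_cast i.pos
    calc |P i k * P⁻¹ k j| = |P i k| * |P⁻¹ k j| := abs_mul _ _
      _ ≤ r ^ ((k : ℕ) - i) * (n * r) ^ ((j : ℕ) - k) :=
          mul_le_mul (hP.abs_le i k hik.le) (ih k hik hkj) (abs_nonneg _) (by positivity)
      _ = n ^ ((j : ℕ) - k) * r ^ (d + 1) := by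
          rw [mul_pow, mul_left_comm, ← pow_add]; congr 2; omega
      _ ≤ n ^ d * r ^ (d + 1) :=
          mul_le_mul_of_nonneg_right (pow_le_pow_right₀ hn (by omega)) (by positivity)
  calc |P⁻¹ i j| ≤ ∑ k ∈ Finset.Ioc i j, |P i k * P⁻¹ k j| := by
        rw [hP.inv_apply_of_lt hlt, abs_neg]
        exact Finset.abs_sum_le_sum_abs _ _
    _ ≤ (Finset.Ioc i j).card • (n ^ d * r ^ (d + 1)) := Finset.sum_le_card_nsmul _ _ _ hterm
    _ ≤ n • (n ^ d * r ^ (d + 1)) := by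
        gcongr; exact (Finset.card_le_univ _).trans_eq (Fintype.card_fin n)
    _ = (n * r) ^ ((j : ℕ) - i) := by rw [hd, nsmul_eq_mul]; ring

end IsGradedUnitriangular

end UnitUpperTriangular

theorem IsGradedUnitriangular.isPowBounded_apply {n : ℕ} {a b m : ℝ}
    {Φ : ℝ → Matrix (Fin n) (Fin n) ℝ} (hm : 1 ≤ m) (hcont : ContinuousOn Φ (Icc a b))
    (hΦ : ∀ t ∈ Icc a b, IsGradedUnitriangular (m * (t - a)) (Φ t)) {i j : Fin n} (hij : i ≤ j) :
    IsPowBounded a b (m ^ n) ((j : ℕ) - i) (fun t => Φ t i j) := by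
  refine .of_continuousOn ((continuousOn_pi.1 (continuousOn_pi.1 hcont i) j).mono
    Ioc_subset_Icc_self) fun t ht => ?_
  have hta : 0 ≤ t - a := sub_nonneg.2 ht.1.le
  calc |Φ t i j| ≤ (m * (t - a)) ^ ((j : ℕ) - i) :=
        (hΦ t (Ioc_subset_Icc_self ht)).abs_le i j hij
    _ = m ^ ((j : ℕ) - i) * (t - a) ^ ((j : ℕ) - i) := mul_pow _ _ _
    _ ≤ m ^ n * (t - a) ^ ((j : ℕ) - i) :=
        mul_le_mul_of_nonneg_right (pow_le_pow_right₀ hm (by omega)) (by positivity)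

section FundamentalMatrix

variable {n : ℕ} {a : ℕ → ℝ → ℝ}

theorem triA_mul_apply_of_lt (s : ℝ) (P : Matrix (Fin n) (Fin n) ℝ) {i : Fin n} (j : Fin n)
    (hi : (i : ℕ) + 1 < n) : (triA n a s * P) i j = a (i + 2) s * P ⟨i + 1, hi⟩ j := by
  rw [Matrix.mul_apply, Finset.sum_eq_single_of_mem ⟨i + 1, hi⟩ (Finset.mem_univ _)]
  · simp [triA]
  · intro k _ hk
    simp [triA, Fin.ext_iff.not.1 hk]

theorem triA_mul_apply_of_le (s : ℝ) (P : Matrix (Fin n) (Fin n) ℝ) {i : Fin n} (j : Fin n)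
    (hi : n ≤ (i : ℕ) + 1) : (triA n a s * P) i j = 0 := by
  rw [Matrix.mul_apply]
  refine Finset.sum_eq_zero fun k _ => ?_
  simp [triA, show (k : ℕ) ≠ i + 1 by omega]

namespace IsFundamental

variable {t0 τ M : ℝ} {Φ : ℝ → Matrix (Fin n) (Fin n) ℝ}

theorem apply_of_le (hΦ : IsFundamental n t0 τ (triA n a) Φ) {t : ℝ} (ht : t ∈ Icc t0 τ)
    {i j : Fin n} (hji : j ≤ i) : Φ t i j = (1 : Matrix (Fin n) (Fin n) ℝ) i j := by
  induction i using WellFoundedGT.induction generalizing t with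
  | _ i ih =>
  have hzero : ∀ s ∈ uIcc t0 t, (triA n a s * Φ s) i j = 0 := by
    intro s hs
    rw [uIcc_of_le ht.1] at hs
    rcases lt_or_ge ((i : ℕ) + 1) n with hi | hi
    · have hji' : j < ⟨i + 1, hi⟩ := Fin.lt_def.2 (Nat.lt_succ_of_le hji)
      rw [triA_mul_apply_of_lt s _ j hi,
        ih _ (Fin.lt_def.2 (Nat.lt_succ_self i)) ⟨hs.1, hs.2.trans ht.2⟩ hji'.le,
        Matrix.one_apply_ne hji'.ne', mul_zero]
    · exact triA_mul_apply_of_le s _ j hi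
  rw [hΦ.2 t ht i j, intervalIntegral.integral_congr hzero, intervalIntegral.integral_zero,
    add_zero]

theorem apply_of_lt (hΦ : IsFundamental n t0 τ (triA n a) Φ) {t : ℝ} (ht : t ∈ Icc t0 τ)
    {i j : Fin n} (hij : i < j) (hi : (i : ℕ) + 1 < n) :
    Φ t i j = ∫ s in t0..t, a (i + 2) s * Φ s ⟨i + 1, hi⟩ j := by
  simp only [hΦ.2 t ht i j, Matrix.one_apply_ne hij.ne, zero_add,
    triA_mul_apply_of_lt _ _ j hi]

theorem abs_apply_le (hΦ : IsFundamental n t0 τ (triA n a) Φ) (hM : 0 ≤ M)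
    (ha : ∀ l ∈ Finset.Icc 2 n, ∀ᵐ t ∂volume.restrict (Icc t0 τ), |a l t| ≤ M) {t : ℝ}
    (ht : t ∈ Icc t0 τ) {i j : Fin n} (hij : i ≤ j) :
    |Φ t i j| ≤ (M * (t - t0)) ^ ((j : ℕ) - i) := by
  induction i using WellFoundedGT.induction generalizing t with
  | _ i ih =>
  rcases hij.eq_or_lt with rfl | hlt
  · simp [hΦ.apply_of_le ht le_rfl]
  have hi : (i : ℕ) + 1 < n := lt_of_le_of_lt (Fin.lt_def.1 hlt) j.isLt
  obtain ⟨d, hd⟩ : ∃ d : ℕ, (j : ℕ) - i = d + 1 := ⟨j - i - 1, by omega⟩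
  have hintegrand : ∀ᵐ s, s ∈ Ioc t0 t →
      ‖a (i + 2) s * Φ s ⟨i + 1, hi⟩ j‖ ≤ M ^ (d + 1) * (s - t0) ^ d := by
    filter_upwards [(ae_restrict_iff' measurableSet_Icc).1
      (ha (i + 2) (Finset.mem_Icc.2 ⟨by omega, hi⟩))] with s has hs
    have hs' : s ∈ Icc t0 τ := ⟨hs.1.le, hs.2.trans ht.2⟩
    have hΦs : |Φ s ⟨i + 1, hi⟩ j| ≤ (M * (s - t0)) ^ ((j : ℕ) - (i + 1)) :=
      ih _ (Fin.lt_def.2 (Nat.lt_succ_self i)) hs' hlt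
    calc ‖a (i + 2) s * Φ s ⟨i + 1, hi⟩ j‖ = |a (i + 2) s| * |Φ s ⟨i + 1, hi⟩ j| := abs_mul _ _
      _ ≤ M * (M * (s - t0)) ^ ((j : ℕ) - (i + 1)) :=
          mul_le_mul (has hs') hΦs (abs_nonneg _) hM
      _ = M ^ (d + 1) * (s - t0) ^ d := by
          rw [show (j : ℕ) - (i + 1) = d by omega, mul_pow]; ring
  calc |Φ t i j| = ‖∫ s in t0..t, a (i + 2) s * Φ s ⟨i + 1, hi⟩ j‖ := by
        rw [hΦ.apply_of_lt ht hlt hi, Real.norm_eq_abs]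
    _ ≤ M ^ (d + 1) * (t - t0) ^ (d + 1) :=
        norm_intervalIntegral_le_mul_pow ht.1 (by positivity) hintegrand
    _ = (M * (t - t0)) ^ ((j : ℕ) - i) := by rw [hd, mul_pow]

theorem isGradedUnitriangular (hΦ : IsFundamental n t0 τ (triA n a) Φ) (hM : 0 ≤ M)
    (ha : ∀ l ∈ Finset.Icc 2 n, ∀ᵐ t ∂volume.restrict (Icc t0 τ), |a l t| ≤ M) {t : ℝ}
    (ht : t ∈ Icc t0 τ) : IsGradedUnitriangular (M * (t - t0)) (Φ t) where
  isUpperTriangular i j (hji : j < i) := by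
    rw [hΦ.apply_of_le ht hji.le, Matrix.one_apply_ne hji.ne']
  diag i := by rw [hΦ.apply_of_le ht le_rfl, Matrix.one_apply_eq]
  abs_le _ _ hij := hΦ.abs_apply_le hM ha ht hij

theorem continuousOn {A : ℝ → Matrix (Fin n) (Fin n) ℝ} (hΦ : IsFundamental n t0 τ A Φ) :
    ContinuousOn Φ (Icc t0 τ) :=
  continuousOn_pi.2 fun i => continuousOn_pi.2 fun j => hΦ.1 i j

theorem isPowBounded_apply (hΦ : IsFundamental n t0 τ (triA n a) Φ) (hM : 1 ≤ M)
    (ha : ∀ l ∈ Finset.Icc 2 n, ∀ᵐ t ∂volume.restrict (Icc t0 τ), |a l t| ≤ M) {i j : Fin n}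
    (hij : i ≤ j) : IsPowBounded t0 τ (M ^ n) ((j : ℕ) - i) (fun t => Φ t i j) :=
  IsGradedUnitriangular.isPowBounded_apply hM hΦ.continuousOn
    (fun _ ht => hΦ.isGradedUnitriangular (zero_le_one.trans hM) ha ht) hij

theorem isPowBounded_inv_apply (hΦ : IsFundamental n t0 τ (triA n a) Φ) (hM : 1 ≤ M)
    (ha : ∀ l ∈ Finset.Icc 2 n, ∀ᵐ t ∂volume.restrict (Icc t0 τ), |a l t| ≤ M) {i j : Fin n}
    (hij : i ≤ j) : IsPowBounded t0 τ ((n * M) ^ n) ((j : ℕ) - i) (fun t => (Φ t)⁻¹ i j) := by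
  have hM0 : 0 ≤ M := zero_le_one.trans hM
  have hn : (1 : ℝ) ≤ n := by exact_mod_cast i.pos
  have hgraded : ∀ t ∈ Icc t0 τ, IsGradedUnitriangular (M * (t - t0)) (Φ t) := fun t ht =>
    hΦ.isGradedUnitriangular hM0 ha ht
  have hcont : ContinuousOn (fun t => (Φ t)⁻¹) (Icc t0 τ) :=
    continuousOn_matrix_inv hΦ.continuousOn fun t ht => (hgraded t ht).isUnit_det
  refine IsGradedUnitriangular.isPowBounded_apply (one_le_mul_of_one_le_of_one_le hn hM) hcont
    (fun t ht => ?_) hij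
  rw [mul_assoc]
  exact (hgraded t ht).inv (mul_nonneg hM0 (sub_nonneg.2 ht.1))

end IsFundamental

end FundamentalMatrix

section Xi

variable {n : ℕ} {t0 t : ℝ}

theorem norm_le_supN {d : ℝ → Fin n → ℝ} (hd : ContinuousOn d (Icc t0 t)) {s : ℝ}
    (hs : s ∈ Icc t0 t) : ‖d s‖ ≤ supN n t0 t d := by
  have hbdd : BddAbove (range fun s : Icc t0 t => ‖d s‖) := by
    simpa only [image_eq_range] using isCompact_Icc.bddAbove_image hd.norm
  exact le_ciSup hbdd ⟨s, hs⟩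

variable [NeZero n]

theorem triC_mul_apply (P : Matrix (Fin n) (Fin n) ℝ) (i : Fin 1) (j : Fin n) :
    (triC n * P) i j = P 0 j := by
  rw [Matrix.mul_apply, Finset.sum_eq_single_of_mem 0 (Finset.mem_univ _)]
  · simp [triC]
  · intro k _ hk
    simp [triC, hk]

theorem gram_triC_mulVec_apply (P : Matrix (Fin n) (Fin n) ℝ) (v : Fin n → ℝ) (i : Fin n) :
    ((Pᵀ * (triC n)ᵀ * triC n * P) *ᵥ v) i = P 0 i * ∑ k, P 0 k * v k := by
  rw [Matrix.mul_assoc, ← Matrix.transpose_mul, ← Matrix.mulVec_mulVec]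
  simp [Matrix.mulVec, dotProduct, triC_mul_apply]

theorem Xi_triC_apply (Φ : ℝ → Matrix (Fin n) (Fin n) ℝ) (g : ℝ → (Fin n → ℝ) → Fin n → ℝ)
    (z : ℝ → Fin n → ℝ) (t : ℝ) (i : Fin n) :
    Xi n 1 t0 (fun _ => triC n) Φ g z t i =
      ∫ ρ in t0..t, Φ ρ 0 i * ∑ k, Φ ρ 0 k * ∫ s in t0..ρ, ((Φ s)⁻¹ *ᵥ g s (z s)) k := by
  simp only [Xi, gram_triC_mulVec_apply]

theorem abs_Xi_triC_sub_le {Φ : ℝ → Matrix (Fin n) (Fin n) ℝ}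
    {g : ℝ → (Fin n → ℝ) → Fin n → ℝ} {z₁ z₂ : ℝ → Fin n → ℝ} {B c : ℝ} (ht : t0 < t)
    (hΦ : ∀ j : Fin n, IsPowBounded t0 t c j (fun ρ => Φ ρ 0 j))
    (hg : ∀ k : Fin n, IsPowBounded t0 t B (n - 1 - k)
      (fun s => ((Φ s)⁻¹ *ᵥ g s (z₁ s)) k - ((Φ s)⁻¹ *ᵥ g s (z₂ s)) k)) (i : Fin n) :
    |(Xi n 1 t0 (fun _ => triC n) Φ g z₁ t - Xi n 1 t0 (fun _ => triC n) Φ g z₂ t) i| ≤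
      c * (n * (c * B)) * (t - t0) ^ (n + i + 1) := by
  have hterm : ∀ k : Fin n, IsPowBounded t0 t (c * B) n (fun ρ => Φ ρ 0 k *
      ((∫ s in t0..ρ, ((Φ s)⁻¹ *ᵥ g s (z₁ s)) k) - ∫ s in t0..ρ, ((Φ s)⁻¹ *ᵥ g s (z₂ s)) k)) := by
    intro k
    have hexp : (k : ℕ) + (n - 1 - k + 1) = n := by omega
    simpa only [hexp] using (hΦ k).mul (hg k).integral_sub
  have hsum := (hΦ i).mul (.sum Finset.univ fun k _ => hterm k)
  simp only [mul_sub, Finset.sum_sub_distrib, Finset.card_univ, Fintype.card_fin,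
    Nat.add_comm (i : ℕ) n] at hsum
  simpa only [Pi.sub_apply, Xi_triC_apply] using hsum.integral_sub.abs_le t ⟨ht, le_rfl⟩

theorem triG_sub_triG (f : ℕ → ℝ → ℝ) (fn : ℝ → (Fin n → ℝ) → ℝ) (s : ℝ) (x y : Fin n → ℝ) :
    triG n f fn s x - triG n f fn s y = Pi.single ⊤ (fn s x - fn s y) := by
  ext i
  by_cases hi : i = ⊤
  · simp [triG, hi]
  · have hi' : (i : ℕ) ≠ n - 1 := fun h => hi (Fin.ext h)
    simp [triG, hi, hi']

theorem mulVec_triG_sub_mulVec_triG (X : Matrix (Fin n) (Fin n) ℝ) (f : ℕ → ℝ → ℝ)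
    (fn : ℝ → (Fin n → ℝ) → ℝ) (s : ℝ) (x y : Fin n → ℝ) (k : Fin n) :
    (X *ᵥ triG n f fn s x) k - (X *ᵥ triG n f fn s y) k = X k ⊤ * (fn s x - fn s y) := by
  rw [← Pi.sub_apply, ← Matrix.mulVec_sub, triG_sub_triG]
  simp [Matrix.mulVec_single]

end Xi

theorem isPowBounded_sub_of_lipschitz {n : ℕ} {t0 t R L : ℝ} {fn : ℝ → (Fin n → ℝ) → ℝ}
    (hL : 0 ≤ L) (hmeas : ∀ v, Measurable fun s => fn s v)
    (hcont : ∀ s ∈ Icc t0 t, Continuous (fn s))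
    (hLip : ∀ s ∈ Icc t0 t, ∀ z1 z2 : Fin n → ℝ,
      ‖z1‖ ≤ R → ‖z2‖ ≤ R → |fn s z1 - fn s z2| ≤ L * ‖z1 - z2‖)
    {d1 d2 : ℝ → Fin n → ℝ} (hd1 : ContinuousOn d1 (Icc t0 t)) (hd2 : ContinuousOn d2 (Icc t0 t))
    (hR1 : supN n t0 t d1 ≤ R) (hR2 : supN n t0 t d2 ≤ R) :
    IsPowBounded t0 t (L * supN n t0 t (fun s => d1 s - d2 s)) 0
      (fun s => fn s (d1 s) - fn s (d2 s)) := by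
  have hmem : Ioc t0 t ⊆ Icc t0 t := Ioc_subset_Icc_self
  have hcomp : ∀ d : ℝ → Fin n → ℝ, ContinuousOn d (Icc t0 t) →
      AEStronglyMeasurable (fun s => fn s (d s)) (volume.restrict (Ioc t0 t)) := fun d hd =>
    aestronglyMeasurable_comp_of_continuous measurableSet_Ioc hmeas
      (fun s hs => hcont s (hmem hs)) ((hd.mono hmem).aemeasurable measurableSet_Ioc)
  refine ⟨(hcomp d1 hd1).sub (hcomp d2 hd2), fun s hs => ?_⟩
  calc |fn s (d1 s) - fn s (d2 s)| ≤ L * ‖d1 s - d2 s‖ :=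
        hLip s (hmem hs) _ _ ((norm_le_supN hd1 (hmem hs)).trans hR1)
          ((norm_le_supN hd2 (hmem hs)).trans hR2)
    _ ≤ L * supN n t0 t (fun s => d1 s - d2 s) :=
        mul_le_mul_of_nonneg_left (norm_le_supN (hd1.sub hd2) (hmem hs)) hL
    _ = L * supN n t0 t (fun s => d1 s - d2 s) * (s - t0) ^ 0 := by rw [pow_zero, mul_one]

theorem TriRegular.memLp_top_coeff {n : ℕ} {t0 τ : ℝ} {a f : ℕ → ℝ → ℝ}
    {fn : ℝ → (Fin n → ℝ) → ℝ} (h : TriRegular n t0 τ a f fn) {l : ℕ} (hl : l ∈ Finset.Icc 2 n) :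
    MemLp (a l) ⊤ (volume.restrict (Icc t0 τ)) :=
  have ⟨h2, hn⟩ := Finset.mem_Icc.1 hl
  memLp_top_restrict_of_exists_forall_mem_norm_le measurableSet_Icc
    (h.1 l h2 hn).aestronglyMeasurable (h.2.1 l h2 hn)

theorem TriRegular.integrableOn_drift {n : ℕ} {t0 τ : ℝ} {a f : ℕ → ℝ → ℝ}
    {fn : ℝ → (Fin n → ℝ) → ℝ} (h : TriRegular n t0 τ a f fn) {l : ℕ}
    (hl : l ∈ Finset.Icc 1 (n - 1)) : IntegrableOn (f l) (Icc t0 τ) :=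
  have ⟨h1, hn⟩ := Finset.mem_Icc.1 hl
  (memLp_top_restrict_of_exists_forall_mem_norm_le measurableSet_Icc
    (h.2.2.1 l h1 hn).aestronglyMeasurable (h.2.2.2.1 l h1 hn)).integrable le_top

theorem stmt15_general {n : ℕ} [NeZero n] {t0 τ : ℝ} {a f : ℕ → ℝ → ℝ}
    {fn : ℝ → (Fin n → ℝ) → ℝ}
    (ha : ∀ l ∈ Finset.Icc 2 n, MemLp (a l) ⊤ (volume.restrict (Icc t0 τ)))
    (_hf : ∀ l ∈ Finset.Icc 1 (n - 1), IntegrableOn (f l) (Icc t0 τ))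
    (hmeas : ∀ v, Measurable fun t => fn t v) (hcont : ∀ t ∈ Icc t0 τ, Continuous (fn t))
    {Φ : ℝ → Matrix (Fin n) (Fin n) ℝ} (hΦ : IsFundamental n t0 τ (triA n a) Φ)
    {R L : ℝ} (hL : 0 < L)
    (hLip : ∀ t ∈ Icc t0 τ, ∀ z1 z2 : Fin n → ℝ,
      ‖z1‖ ≤ R → ‖z2‖ ≤ R → |fn t z1 - fn t z2| ≤ L * ‖z1 - z2‖) :
    ∃ K > (0 : ℝ), ∀ t ∈ Ioc t0 τ, ∀ d1 d2 : ℝ → Fin n → ℝ,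
      ContinuousOn d1 (Icc t0 t) → ContinuousOn d2 (Icc t0 t) →
      supN n t0 t d1 ≤ R → supN n t0 t d2 ≤ R →
      ∀ i : Fin n,
        |(Xi n 1 t0 (fun _ => triC n) Φ (triG n f fn) d1 t
            - Xi n 1 t0 (fun _ => triC n) Φ (triG n f fn) d2 t) i|
          ≤ K * (t - t0) ^ (n + (i : ℕ) + 1) * supN n t0 t (fun s => d1 s - d2 s) := by
  obtain ⟨M, hM, haM⟩ := exists_ae_norm_le_of_memLp_top _ ha
  have hn : (0 : ℝ) < n := by exact_mod_cast NeZero.pos n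
  refine ⟨n * (M ^ n * M ^ n * (n * M) ^ n * L), by positivity,
    fun t ht d1 d2 hd1 hd2 hR1 hR2 i => ?_⟩
  have hrow (j : Fin n) : IsPowBounded t0 t (M ^ n) j (fun s => Φ s 0 j) :=
    (hΦ.isPowBounded_apply hM haM (Fin.zero_le j)).mono_right ht.2
  have hcol (k : Fin n) : IsPowBounded t0 t ((n * M) ^ n) (n - 1 - k) (fun s => (Φ s)⁻¹ k ⊤) :=
    (hΦ.isPowBounded_inv_apply hM haM le_top).mono_right ht.2
  have hsub : Icc t0 t ⊆ Icc t0 τ := Icc_subset_Icc_right ht.2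
  have hlast := isPowBounded_sub_of_lipschitz hL.le hmeas (fun s hs => hcont s (hsub hs))
    (fun s hs => hLip s (hsub hs)) hd1 hd2 hR1 hR2
  have hdiff (k : Fin n) :
      IsPowBounded t0 t ((n * M) ^ n * (L * supN n t0 t fun s => d1 s - d2 s)) (n - 1 - k)
        (fun s => ((Φ s)⁻¹ *ᵥ triG n f fn s (d1 s)) k - ((Φ s)⁻¹ *ᵥ triG n f fn s (d2 s)) k) := by
    simpa only [mulVec_triG_sub_mulVec_triG, add_zero] using (hcol k).mul hlast
  exact (abs_Xi_triC_sub_le ht.1 hrow hdiff i).trans_eq (by ring)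

theorem stmt15 (n : ℕ) (hn : 2 ≤ n) (t0 τ : ℝ) (ht : t0 < τ)
    (a f : ℕ → ℝ → ℝ) (fn : ℝ → (Fin n → ℝ) → ℝ)
    (hreg : TriRegular n t0 τ a f fn)
    (Φ : ℝ → Matrix (Fin n) (Fin n) ℝ) (hΦ : IsFundamental n t0 τ (triA n a) Φ)
    (hΦinv : ∀ t ∈ Set.Icc t0 τ, IsUnit (Φ t))
    (R L : ℝ) (hR : 0 < R) (hL : 0 < L)
    (hLip : ∀ t ∈ Set.Icc t0 τ, ∀ z1 z2 : Fin n → ℝ,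
      ‖z1‖ ≤ R → ‖z2‖ ≤ R → |fn t z1 - fn t z2| ≤ L * ‖z1 - z2‖) :
    ∃ K > (0:ℝ), ∀ t ∈ Set.Ioc t0 τ, ∀ d1 d2 : ℝ → (Fin n → ℝ),
      ContinuousOn d1 (Set.Icc t0 t) → ContinuousOn d2 (Set.Icc t0 t) →
      supN n t0 t d1 ≤ R → supN n t0 t d2 ≤ R →
      ∀ i : Fin n,
        |(Xi n 1 t0 (fun _ => triC n) Φ (triG n f fn) d1 t
            - Xi n 1 t0 (fun _ => triC n) Φ (triG n f fn) d2 t) i|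
          ≤ K * (t - t0) ^ (n + (i : ℕ) + 1) * supN n t0 t (fun s => d1 s - d2 s) := by
  have : NeZero n := ⟨by omega⟩
  have ⟨_, _, _, _, hmeas, hcont⟩ := hreg
  exact stmt15_general (fun _ => hreg.memLp_top_coeff) (fun _ => hreg.integrableOn_drift)
    hmeas hcont hΦ hL hLip
end
end
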